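/- arXiv:1910.11816 — 3 statements merged into one kernel-verified Lean document; each statement's English description precedes it below -/
import Mathlib

section
/- Let X be a finite set and let A be a nontrivial abelian subgroup of Sym(X) having exactly two orbits on X. Suppose that for every orbit O of A, if the factor group A_O/A_O^* is an elementary abelian 2-group, then A_O is an elementary abelian 2-group (i.e., a(a(x)) = x for all a ∈ A and x ∈ O). Then A is the automorphism group of a 4-coloured graph on X (A ∈ GR(4)). -/
/-- The orbit of a point `x` under a set `G` of permutations of `X`. -/
def orbitOf {X : Type*} (G : Set (Equiv.Perm X)) (x : X) : Set X :=
  {y | ∃ a ∈ G, a x = y}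

/-- A permutation `σ` is 2-orbit-compatible with `G` if for every pair of orbits
`O` and `Q` of `G` there is an element of `G` agreeing with `σ` on `O ∪ Q`. -/
def TwoOrbitCompatible {X : Type*} (G : Set (Equiv.Perm X)) (σ : Equiv.Perm X) : Prop :=
  ∀ x y : X, ∃ a ∈ G, ∀ z ∈ orbitOf G x ∪ orbitOf G y, σ z = a z

/-- A subgroup `A ≤ Sym(X)` is 2-orbit-closed if every permutation that is
2-orbit-compatible with `A` belongs to `A`. -/
def TwoOrbitClosed {X : Type*} (A : Subgroup (Equiv.Perm X)) : Prop :=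
  ∀ σ : Equiv.Perm X, TwoOrbitCompatible (A : Set (Equiv.Perm X)) σ → σ ∈ A

/-- `A` is precisely the automorphism group of the `k`-coloured graph `γ` on `X`. -/
def IsColGraphAutGroup {X : Type*} {k : ℕ} (γ : Sym2 X → Fin k)
    (A : Subgroup (Equiv.Perm X)) : Prop :=
  ∀ σ : Equiv.Perm X, σ ∈ A ↔ ∀ x y : X, x ≠ y → γ s(σ x, σ y) = γ s(x, y)

/-- `A ∈ GR`: `A` is the automorphism group of some coloured graph on `X`. -/
def InGR {X : Type*} (A : Subgroup (Equiv.Perm X)) : Prop :=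
  ∃ k : ℕ, 1 ≤ k ∧ ∃ γ : Sym2 X → Fin k, IsColGraphAutGroup γ A

/-- `A ∈ GR(4)`: `A` is the automorphism group of some 4-coloured graph on `X`. -/
def InGR4 {X : Type*} (A : Subgroup (Equiv.Perm X)) : Prop :=
  ∃ γ : Sym2 X → Fin 4, IsColGraphAutGroup γ A

/-- The factor group `A_O / A_O^*` is an elementary abelian 2-group: for every `a ∈ A`,
the restriction of `a²` to `O` is the restriction of some element of `A` that fixes
every point outside `O`. -/
def FactorIsElem2 {X : Type*} (A : Subgroup (Equiv.Perm X)) (O : Set X) : Prop :=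
  ∀ a ∈ A, ∃ b ∈ A, (∀ z ∈ O, b z = a (a z)) ∧ ∀ z ∉ O, b z = z

namespace ColAb

section Inner
variable {G : Type*} [AddCommGroup G]

open Classical in
/-- The role of a difference `d` with respect to the generating sequence `s 0, ..., s (m-1)`. -/
noncomputable def role (s : ℕ → G) (m : ℕ) (u : Fin 4) (d : G) : Fin 4 :=
  if 0 < m ∧ (d = s 0 ∨ d = -s 0) then u
  else if ∃ i, i < m ∧ (d = s i ∨ d = -s i) then 1
  else if ∃ k, k + 1 < m ∧ (d = s k - s (k+1) ∨ d = s (k+1) - s k) then 2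
  else 0

/-- Irredundancy of a finite sequence, expressed through quotients. -/
def Irr (s : ℕ → G) (m : ℕ) : Prop :=
  ∀ k < m, ∃ Q : AddSubgroup G, QuotientAddGroup.mk' Q (s k) ≠ 0 ∧
    ∀ i < m, i ≠ k → QuotientAddGroup.mk' Q (s i) = 0

/-- Either no element of the sequence is an involution, or the group has exponent two. -/
def NoInv (s : ℕ → G) (m : ℕ) : Prop :=
  (∀ i < m, s i + s i ≠ 0) ∨ ∀ g : G, g + g = 0

theorem role_neg (s : ℕ → G) (m : ℕ) (u : Fin 4) (d : G) : role s m u (-d) = role s m u d := by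
  have h1 : ∀ x : G, (-d = x ∨ -d = -x) ↔ (d = x ∨ d = -x) := by
    intro x
    rw [neg_inj, neg_eq_iff_eq_neg]; tauto
  have h2 : ∀ x y : G, (-d = x - y ∨ -d = y - x) ↔ (d = x - y ∨ d = y - x) := by
    intro x y
    rw [neg_eq_iff_eq_neg, neg_eq_iff_eq_neg, neg_sub, neg_sub]; tauto
  classical
  unfold role
  exact if_congr (and_congr_right fun _ => h1 _) rfl
    (if_congr (exists_congr fun i => and_congr_right fun _ => h1 _) rfl
      (if_congr (exists_congr fun i => and_congr_right fun _ => h2 _ _) rfl rfl))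

theorem irr_ne_zero {s : ℕ → G} {m : ℕ} (hs : Irr s m) {k : ℕ} (hk : k < m) : s k ≠ 0 := by
  obtain ⟨Q, h, -⟩ := hs k hk
  intro h0
  exact h (by rw [h0, map_zero])

theorem irr_ne {s : ℕ → G} {m : ℕ} (hs : Irr s m) {j k : ℕ} (hj : j < m) (hk : k < m)
    (hjk : j ≠ k) : ¬ (s k = s j ∨ s k = - s j) := by
  obtain ⟨Q, h, h'⟩ := hs k hk
  have := h' j hj hjk
  rintro (h0 | h0)
  · exact h (by rw [h0, this])
  · exact h (by rw [h0, map_neg, this, neg_zero])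

theorem irr_sub_ne {s : ℕ → G} {m : ℕ} (hs : Irr s m) {i j k : ℕ} (hi : i < m) (hj : j < m)
    (hk : k < m) (hij : i ≠ j) : ¬ (s i - s j = s k ∨ s i - s j = - s k) := by
  by_cases hki : k = i
  · obtain ⟨Q, h, h'⟩ := hs j hj
    have h1 := h' i hi hij
    subst hki
    rintro (h0 | h0) <;>
    · have := congrArg (QuotientAddGroup.mk' Q) h0
      rw [map_sub] at this
      first | rw [map_neg, h1] at this | rw [h1] at this
      simp only [zero_sub, neg_eq_zero, neg_zero] at this
      exact h this
  · obtain ⟨Q, h, h'⟩ := hs i hi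
    have h1 := h' j hj (Ne.symm hij)
    have h2 := h' k hk hki
    rintro (h0 | h0) <;>
    · have := congrArg (QuotientAddGroup.mk' Q) h0
      rw [map_sub] at this
      first | rw [map_neg, h1, h2] at this | rw [h1, h2] at this
      simp only [sub_zero, neg_zero] at this
      exact h this

theorem coin {s : ℕ → G} {m : ℕ} (hs : Irr s m) (hn : NoInv s m) {i j k : ℕ} (hi : i < m)
    (hj : j < m) (hk : k + 1 < m) {v : G} (hv : v = s j ∨ v = - s j)
    (h : v - s i = s k - s (k+1) ∨ v - s i = s (k+1) - s k) :
    v = s j ∧ (j = i + 1 ∨ i = j + 1) := by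
  have key : ∀ a b : ℕ, a < m → b < m → a ≠ b →
      (v - s i = s a - s b ∨ v - s i = s b - s a) → a = i ∨ a = j := by
    intro a b ha hb hab h
    by_contra hc
    push Not at hc
    obtain ⟨Q, h0, h'⟩ := hs a ha
    have e1 := h' i hi (Ne.symm hc.1)
    have e2 := h' j hj (Ne.symm hc.2)
    have e3 := h' b hb (Ne.symm hab)
    have e4 : QuotientAddGroup.mk' Q v = 0 := by
      rcases hv with hv | hv <;> rw [hv]
      · exact e2
      · rw [map_neg, e2, neg_zero]
    rcases h with h | h <;>
    · have := congrArg (QuotientAddGroup.mk' Q) h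
      rw [map_sub, map_sub, e4, e1, e3] at this
      simp only [sub_zero, zero_sub, zero_eq_neg] at this
      first | exact h0 this | exact h0 this.symm
  have k1 := key k (k+1) (by omega) hk (by omega) h
  have k2 := key (k+1) k hk (by omega) (by omega) h.symm
  have hadj : j = i + 1 ∨ i = j + 1 := by omega
  refine ⟨?_, hadj⟩
  rcases hv with hv | hv
  · exact hv
  rcases hn with hn | hn
  · exfalso
    have hki : (v - s i = s i - s j ∨ v - s i = s j - s i) := by
      rcases k1 with rfl | rfl <;> rcases k2 with k2 | k2
      · omega
      · subst k2; exact h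
      · subst k2; exact h.symm
      · omega
    rcases hki with e | e
    · apply hn i hi
      rw [hv] at e
      have : s i + s i = (s i - s j) - (- s j - s i) := by abel
      rw [this, e, sub_self]
    · apply hn j hj
      rw [hv] at e
      have : s j + s j = (s j - s i) - (- s j - s i) := by abel
      rw [this, e, sub_self]
  · rw [hv]; exact (eq_neg_of_add_eq_zero_left (hn (s j))).symm

theorem role_zero_idx {s : ℕ → G} {m : ℕ} {u : Fin 4} (hm : 0 < m) : role s m u (s 0) = u := by
  unfold role
  rw [if_pos ⟨hm, Or.inl rfl⟩]

theorem role_idx {s : ℕ → G} {m : ℕ} (hs : Irr s m) {u : Fin 4} {i : ℕ} (hi : i < m)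
    (h0 : i ≠ 0) : role s m u (s i) = 1 := by
  unfold role
  rw [if_neg, if_pos ⟨i, hi, Or.inl rfl⟩]
  rintro ⟨hm, h⟩
  exact irr_ne hs hm hi (Ne.symm h0) h

theorem role_sub {s : ℕ → G} {m : ℕ} (hs : Irr s m) {u : Fin 4} {i : ℕ} (hi : i + 1 < m) :
    role s m u (s (i+1) - s i) = 2 := by
  unfold role
  rw [if_neg, if_neg, if_pos ⟨i, hi, Or.inr rfl⟩]
  · rintro ⟨k, hk, h⟩
    exact irr_sub_ne hs hi (by omega) hk (by omega) h
  · rintro ⟨hm, h⟩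
    exact irr_sub_ne hs hi (by omega) hm (by omega) h

theorem role_eq_one {s : ℕ → G} {m : ℕ} {u : Fin 4} (hu : u = 2 ∨ u = 3) {d : G}
    (h : role s m u d = 1) : ∃ i, i ≠ 0 ∧ i < m ∧ (d = s i ∨ d = -s i) := by
  unfold role at h
  split_ifs at h with h1 h2 h3
  · rcases hu with rfl | rfl <;> simp at h
  · obtain ⟨i, hi, h⟩ := h2
    refine ⟨i, ?_, hi, h⟩
    rintro rfl
    exact h1 ⟨hi, h⟩
  · simp at h
  · simp at h

theorem role_eq_two {s : ℕ → G} {m : ℕ} {u : Fin 4} {d : G}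
    (h : role s m u d = 2) : (0 < m ∧ (d = s 0 ∨ d = - s 0)) ∨
      ∃ k, k + 1 < m ∧ (d = s k - s (k+1) ∨ d = s (k+1) - s k) := by
  unfold role at h
  split_ifs at h with h1 h2 h3
  · exact Or.inl h1
  · simp at h
  · exact Or.inr h3
  · simp at h

theorem role_eq_three {s : ℕ → G} {m : ℕ} {d : G}
    (h : role s m 3 d = 3) : 0 < m ∧ (d = s 0 ∨ d = - s 0) := by
  unfold role at h
  split_ifs at h with h1 h2 h3
  · exact h1
  · simp at h
  · simp at h
  · simp at h

theorem role_two_ne_three {s : ℕ → G} {m : ℕ} (d : G) : role s m 2 d ≠ 3 := by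
  unfold role
  split_ifs <;> simp

/-- Propagation along the path. -/
theorem core {s : ℕ → G} {m : ℕ} (hs : Irr s m) (hn : NoInv s m) {u : Fin 4}
    (hu : u = 2 ∨ u = 3) (τ : G → G) (hinj : Function.Injective τ) (h0 : τ 0 = 0)
    (hτ : ∀ x y, x ≠ y → role s m u (τ x - τ y) = role s m u (x - y))
    (hs0 : τ (s 0) = s 0) : ∀ i < m, τ (s i) = s i := by
  intro i
  induction i using Nat.strong_induction_on with
  | _ n ih =>
    intro hnm
    rcases n with _ | i
    · exact hs0
    have hi := ih i (by omega) (by omega)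
    have c1 : role s m u (τ (s (i+1))) = 1 := by
      have := hτ (s (i+1)) 0 (irr_ne_zero hs hnm)
      rw [h0, sub_zero, sub_zero] at this
      rw [this, role_idx hs hnm (by omega)]
    have c2 : role s m u (τ (s (i+1)) - s i) = 2 := by
      have hne : s (i+1) ≠ s i := fun h =>
        irr_ne hs (j := i) (k := i+1) (by omega) hnm (by omega) (Or.inl h)
      have := hτ (s (i+1)) (s i) hne
      rw [hi] at this
      rw [this, role_sub hs hnm]
    obtain ⟨j, hj0, hjm, hj⟩ := role_eq_one hu c1
    rcases role_eq_two c2 with ⟨hm, h⟩ | ⟨k, hk, h⟩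
    · exfalso
      by_cases hji : j = i
      · subst hji
        obtain ⟨Q, q1, q2⟩ := hs 0 hm
        have q3 := q2 j hjm hj0
        have q4 : QuotientAddGroup.mk' Q (τ (s (j+1)) - s j) = 0 := by
          rcases hj with hj | hj <;> simp only [hj, map_sub, map_neg, q3, sub_zero, neg_zero]
        rcases h with h | h <;> rw [h] at q4
        · exact q1 q4
        · rw [map_neg, neg_eq_zero] at q4; exact q1 q4
      · obtain ⟨Q, q1, q2⟩ := hs j hjm
        have q3 := q2 i (by omega) (Ne.symm hji)
        have q5 := q2 0 hm (Ne.symm hj0)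
        have q4 : QuotientAddGroup.mk' Q (τ (s (i+1)) - s i) = 0 := by
          rcases h with h | h <;> simp only [h, map_neg, q5, neg_zero]
        rw [map_sub, q3, sub_zero] at q4
        rcases hj with h | h <;> rw [h] at q4
        · exact q1 q4
        · rw [map_neg, neg_eq_zero] at q4; exact q1 q4
    · obtain ⟨e, hadj⟩ := coin hs hn (by omega) hjm hk hj h
      rcases hadj with rfl | hadj
      · exact e
      · exfalso
        have h1 := ih j (by omega) hjm
        have h2 := hinj (e.trans h1.symm)
        exact irr_ne hs hjm hnm (by omega) (Or.inl h2)

/-- Full rigidity with four colours. -/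
theorem rigid {s : ℕ → G} {m : ℕ} (hs : Irr s m) (hn : NoInv s m)
    (hgen : AddSubgroup.closure {x | ∃ i < m, x = s i} = ⊤)
    (σ : G → G) (hinj : Function.Injective σ)
    (hσ : ∀ x y, x ≠ y → role s m 3 (σ x - σ y) = role s m 3 (x - y)) :
    ∃ ε : ℤ, (ε = 1 ∨ ε = -1) ∧ ∀ x, σ x = σ 0 + ε • x := by
  have loc : ∀ x, ∃ ε : ℤ, (ε = 1 ∨ ε = -1) ∧ ∀ i < m, σ (x + s i) = σ x + ε • s i := by
    intro x
    by_cases hm : 0 < m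
    swap
    · exact ⟨1, Or.inl rfl, fun i hi => by omega⟩
    have pres : ∀ y z, y ≠ z → role s m 3 ((σ (x + y) - σ x) - (σ (x + z) - σ x)) =
        role s m 3 (y - z) := by
      intro y z hyz
      have := hσ (x + y) (x + z) (by simpa using hyz)
      rw [sub_sub_sub_cancel_right, this]
      congr 1; abel
    have c3 : role s m 3 (σ (x + s 0) - σ x) = 3 := by
      have := pres (s 0) 0 (irr_ne_zero hs hm)
      simpa [role_zero_idx hm] using this
    obtain ⟨-, h | h⟩ := role_eq_three c3
    · refine ⟨1, Or.inl rfl, fun i hi => ?_⟩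
      have := core hs hn (Or.inr rfl) (fun y => σ (x + y) - σ x)
        (fun y z h => by simpa using hinj (sub_left_injective h)) (by simp) pres h i hi
      rw [one_smul]; exact sub_eq_iff_eq_add'.mp this
    · refine ⟨-1, Or.inr rfl, fun i hi => ?_⟩
      have := core hs hn (Or.inr rfl) (fun y => -(σ (x + y) - σ x))
        (fun y z h => by simpa using hinj (sub_left_injective (neg_injective h))) (by simp)
        (by
          intro y z hyz
          rw [← pres y z hyz, ← role_neg]
          congr 1; abel)
        (by rw [h, neg_neg]) i hi
      rw [neg_one_smul]; exact sub_eq_iff_eq_add'.mp (neg_eq_iff_eq_neg.mp this)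
  have glob : ∃ ε : ℤ, (ε = 1 ∨ ε = -1) ∧ ∀ x, ∀ i < m, σ (x + s i) = σ x + ε • s i := by
    rcases hn with hn | hn
    · choose ε hε hl using loc
      have step : ∀ x, ∀ i < m, ε (x + s i) = ε x := by
        intro x i hi
        by_contra hne
        have h1 := hl x i hi
        have h2 := hl (x + s i) i hi
        have h3 : σ (x + s i + s i) = σ x := by
          rw [h2, h1, add_assoc, ← add_smul]
          have : ε x + ε (x + s i) = 0 := by
            rcases hε x with a | a <;> rcases hε (x + s i) with b | b <;> omega
          rw [this, zero_smul, add_zero]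
        have h4 := hinj h3
        rw [add_assoc] at h4
        exact hn i hi (by simpa using h4)
      have const : ∀ g x, ε (x + g) = ε x := by
        intro g
        have hg : g ∈ AddSubgroup.closure {x | ∃ i < m, x = s i} := by rw [hgen]; trivial
        induction hg using AddSubgroup.closure_induction with
        | mem y hy =>
          obtain ⟨i, hi, rfl⟩ := hy
          exact fun x => step x i hi
        | zero => intro x; rw [add_zero]
        | add a b _ _ ha hb => intro x; rw [← add_assoc, hb, ha]
        | neg a _ ha => intro x; rw [← ha (x + -a)]; simp
      refine ⟨ε 0, hε 0, fun x i hi => ?_⟩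
      have := const x 0
      rw [zero_add] at this
      rw [← this]; exact hl x i hi
    · refine ⟨1, Or.inl rfl, fun x i hi => ?_⟩
      obtain ⟨ε, rfl | rfl, h⟩ := loc x
      · exact h i hi
      · rw [h i hi, neg_one_smul, one_smul, eq_neg_of_add_eq_zero_left (hn (s i)), neg_neg,
          ← eq_neg_of_add_eq_zero_left (hn (s i))]
  obtain ⟨ε, hε, h⟩ := glob
  refine ⟨ε, hε, ?_⟩
  have : ∀ g x, σ (x + g) = σ x + ε • g := by
    intro g
    have hg : g ∈ AddSubgroup.closure {x | ∃ i < m, x = s i} := by rw [hgen]; trivial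
    induction hg using AddSubgroup.closure_induction with
    | mem y hy =>
      obtain ⟨i, hi, rfl⟩ := hy
      exact fun x => h x i hi
    | zero => intro x; simp
    | add a b _ _ ha hb => intro x; rw [← add_assoc, hb, ha, smul_add, add_assoc]
    | neg a _ ha =>
      intro x
      have := ha (x + -a)
      rw [neg_add_cancel_right] at this
      rw [this, smul_neg]; abel
  intro x
  have := this x 0
  rwa [zero_add] at this

/-- Relative rigidity with three colours. -/
theorem rel_rigid {K : Type*} [AddCommGroup K] (ψ : G →+ K) {s : ℕ → G} {m : ℕ} (hs : Irr s m)
    (hψ : ∀ i < m, ψ (s i) + ψ (s i) ≠ 0)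
    (hψ2 : ∀ k, k + 1 < m → ψ (s k - s (k+1)) ≠ ψ (s 0) ∧ ψ (s (k+1) - s k) ≠ ψ (s 0))
    (hgen : AddSubgroup.closure {x | ∃ i < m, x = s i} = ⊤)
    (σ : G → G) (hinj : Function.Injective σ)
    (hσ : ∀ x y, x ≠ y → role s m 2 (σ x - σ y) = role s m 2 (x - y))
    (hσψ : ∀ x y, ψ (σ (x + y)) = ψ (σ x) + ψ y) :
    ∀ x, σ x = σ 0 + x := by
  have hn : NoInv s m := Or.inl (fun i hi h => hψ i hi (by rw [← map_add, h, map_zero]))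
  have loc : ∀ x, ∀ i < m, σ (x + s i) = σ x + s i := by
    intro x i hi
    have hm : 0 < m := by omega
    have pres : ∀ y z, y ≠ z → role s m 2 ((σ (x + y) - σ x) - (σ (x + z) - σ x)) =
        role s m 2 (y - z) := by
      intro y z hyz
      have := hσ (x + y) (x + z) (by simpa using hyz)
      rw [sub_sub_sub_cancel_right, this]
      congr 1; abel
    have c3 : role s m 2 (σ (x + s 0) - σ x) = 2 := by
      have := pres (s 0) 0 (irr_ne_zero hs hm)
      simpa [role_zero_idx hm] using this
    have hp : ψ (σ (x + s 0) - σ x) = ψ (s 0) := by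
      rw [map_sub, hσψ]; abel
    have hz : σ (x + s 0) - σ x = s 0 := by
      rcases role_eq_two c3 with ⟨-, h | h⟩ | ⟨k, hk, h | h⟩
      · exact h
      · exfalso
        rw [h, map_neg] at hp
        apply hψ 0 hm
        nth_rewrite 1 [← hp]
        exact neg_add_cancel _
      · exfalso
        rw [h] at hp; exact (hψ2 k hk).1 hp
      · exfalso
        rw [h] at hp; exact (hψ2 k hk).2 hp
    have := core hs hn (Or.inl rfl) (fun y => σ (x + y) - σ x)
        (fun y z h => by simpa using hinj (sub_left_injective h)) (by simp) pres hz i hi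
    nth_rewrite 2 [← this]; abel
  have : ∀ g x, σ (x + g) = σ x + g := by
    intro g
    have hg : g ∈ AddSubgroup.closure {x | ∃ i < m, x = s i} := by rw [hgen]; trivial
    induction hg using AddSubgroup.closure_induction with
    | mem y hy =>
      obtain ⟨i, hi, rfl⟩ := hy
      exact fun x => loc x i hi
    | zero => intro x; simp
    | add a b _ _ ha hb => intro x; rw [← add_assoc, hb, ha, add_assoc]
    | neg a _ ha =>
      intro x
      have := ha (x + -a)
      rw [neg_add_cancel_right] at this
      rw [this]; abel
  intro x
  have := this x 0
  rwa [zero_add] at this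

end Inner

section Gens
variable {G : Type*} [AddCommGroup G]

theorem exists_gens [Finite G] (T : Set G) (hT : AddSubgroup.closure T = ⊤) :
    ∃ (m : ℕ) (s : ℕ → G), (∀ i < m, s i ∈ T) ∧ Irr s m ∧
      AddSubgroup.closure {x | ∃ i < m, x = s i} = ⊤ := by
  classical
  obtain ⟨S, hS, hmin⟩ := (Set.toFinite {S : Set G | S ⊆ T ∧ AddSubgroup.closure S = ⊤}).exists_minimal
    ⟨T, subset_rfl, hT⟩
  obtain ⟨n, ⟨e⟩⟩ := Finite.exists_equiv_fin S
  let s : ℕ → G := fun i => if h : i < n then (e.symm ⟨i, h⟩ : G) else 0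
  have hs : ∀ i (h : i < n), s i = (e.symm ⟨i, h⟩ : G) := fun i h => dif_pos h
  have hset : {x | ∃ i < n, x = s i} = S := by
    ext x
    constructor
    · rintro ⟨i, hi, rfl⟩
      rw [hs i hi]; exact (e.symm ⟨i, hi⟩).2
    · intro hx
      refine ⟨e ⟨x, hx⟩, (e ⟨x, hx⟩).2, ?_⟩
      rw [hs _ (e ⟨x, hx⟩).2]; simp
  have hsS : ∀ i < n, s i ∈ S := fun i hi => by rw [← hset]; exact ⟨i, hi, rfl⟩
  have hinj : ∀ i < n, ∀ j < n, s i = s j → i = j := by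
    intro i hi j hj h
    rw [hs i hi, hs j hj] at h
    simpa using e.symm.injective (Subtype.ext h)
  refine ⟨n, s, fun i hi => hS.1 (hsS i hi), ?_, by rw [hset]; exact hS.2⟩
  intro k hk
  refine ⟨AddSubgroup.closure (S \ {s k}), ?_, ?_⟩
  · intro h
    have h : s k ∈ AddSubgroup.closure (S \ {s k}) := (QuotientAddGroup.eq_zero_iff (s k)).mp h
    have htop : AddSubgroup.closure (S \ {s k}) = ⊤ := by
      rw [eq_top_iff, ← hS.2, AddSubgroup.closure_le]
      intro x hx
      by_cases hxk : x = s k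
      · rw [hxk]; exact h
      · exact AddSubgroup.subset_closure ⟨hx, hxk⟩
    have := hmin (y := S \ {s k}) ⟨fun x hx => hS.1 hx.1, htop⟩ (fun x hx => hx.1) (hsS k hk)
    exact this.2 rfl
  · intro i hi hik
    refine (QuotientAddGroup.eq_zero_iff (s i)).mpr (AddSubgroup.subset_closure ⟨hsS i hi, ?_⟩)
    intro h
    exact hik (hinj i hi k hk h)

theorem closure_compl (L : AddSubgroup G) {x : G} (hx : x ∉ L) :
    AddSubgroup.closure {g | g ∉ L} = ⊤ := by
  rw [eq_top_iff]
  intro g _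
  by_cases hg : g ∈ L
  · have h1 : g + x ∈ AddSubgroup.closure {g | g ∉ L} := by
      apply AddSubgroup.subset_closure
      intro h
      exact hx (by simpa using L.sub_mem h hg)
    have h2 : x ∈ AddSubgroup.closure {g | g ∉ L} := AddSubgroup.subset_closure hx
    simpa using AddSubgroup.sub_mem _ h1 h2
  · exact AddSubgroup.subset_closure hg

/-- Generators whose doubled images are nonzero. -/
theorem exists_gens_double [Finite G] {K : Type*} [AddCommGroup K] (φ : G →+ K) {x : G}
    (hx : φ x + φ x ≠ 0) :
    ∃ (m : ℕ) (s : ℕ → G), (∀ i < m, φ (s i) + φ (s i) ≠ 0) ∧ Irr s m ∧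
      AddSubgroup.closure {x | ∃ i < m, x = s i} = ⊤ := by
  have := exists_gens {g | g ∉ (φ + φ).ker} (closure_compl _ (x := x) hx)
  exact this

/-- Adjusting the signs of the generators. -/
theorem adjust {K : Type*} [AddCommGroup K] (ψ : G →+ K) {s : ℕ → G} {m : ℕ}
    (h1 : ∀ i < m, ψ (s i) + ψ (s i) ≠ 0) (h2 : Irr s m)
    (h3 : AddSubgroup.closure {x | ∃ i < m, x = s i} = ⊤) :
    ∃ t : ℕ → G, (∀ i < m, ψ (t i) + ψ (t i) ≠ 0) ∧ Irr t m ∧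
      AddSubgroup.closure {x | ∃ i < m, x = t i} = ⊤ ∧
      ∀ k, k + 1 < m → ψ (t k - t (k+1)) ≠ ψ (t 0) ∧ ψ (t (k+1) - t k) ≠ ψ (t 0) := by
  classical
  let t : ℕ → G := fun n => Nat.rec (s 0) (fun n r =>
    if ψ (r - s (n+1)) ≠ ψ (s 0) ∧ ψ (s (n+1) - r) ≠ ψ (s 0) then s (n+1) else - s (n+1)) n
  have t0 : t 0 = s 0 := rfl
  have tsucc : ∀ n, t (n+1) = if ψ (t n - s (n+1)) ≠ ψ (s 0) ∧ ψ (s (n+1) - t n) ≠ ψ (s 0)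
      then s (n+1) else - s (n+1) := fun n => rfl
  have ht : ∀ i, t i = s i ∨ t i = - s i := by
    intro i
    rcases i with _ | i
    · exact Or.inl rfl
    · rw [tsucc]; split_ifs <;> simp
  have h1' : ∀ i < m, ψ (t i) + ψ (t i) ≠ 0 := by
    intro i hi h
    rcases ht i with e | e <;> rw [e] at h
    · exact h1 i hi h
    · rw [map_neg, ← neg_add, neg_eq_zero] at h; exact h1 i hi h
  refine ⟨t, h1', ?_, ?_, ?_⟩
  · intro k hk
    obtain ⟨Q, q1, q2⟩ := h2 k hk
    refine ⟨Q, ?_, ?_⟩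
    · rcases ht k with e | e <;> rw [e]
      · exact q1
      · rw [map_neg, neg_ne_zero]; exact q1
    · intro i hi hik
      rcases ht i with e | e <;> rw [e]
      · exact q2 i hi hik
      · rw [map_neg, q2 i hi hik, neg_zero]
  · rw [eq_top_iff, ← h3, AddSubgroup.closure_le]
    rintro x ⟨i, hi, rfl⟩
    have hti : t i ∈ AddSubgroup.closure {x | ∃ i < m, x = t i} :=
      AddSubgroup.subset_closure ⟨i, hi, rfl⟩
    rcases ht i with e | e <;> rw [e] at hti
    · exact hti
    · exact (AddSubgroup.neg_mem_iff _).mp hti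
  · intro k hk
    have hb := h1' k (by omega)
    have hb' := h1 (k+1) hk
    have key : ∀ a b c : K, b + b ≠ 0 → c + c ≠ 0 →
        ¬ (b - c ≠ a ∧ c - b ≠ a) → (b - -c ≠ a ∧ -c - b ≠ a) := by
      intro a b c hb hc h
      have h : b - c = a ∨ c - b = a := by
        by_contra hh; push Not at hh; exact h hh
      refine ⟨fun e => ?_, fun e => ?_⟩
      · rcases h with h | h
        · apply hc
          have : c + c = (b - -c) - (b - c) := by abel
          rw [this, e, h, sub_self]
        · apply hb
          have : b + b = (b - -c) - (c - b) := by abel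
          rw [this, e, h, sub_self]
      · rcases h with h | h
        · apply hb
          have : b + b = (b - c) - (-c - b) := by abel
          rw [this, e, h, sub_self]
        · apply hc
          have : c + c = (c - b) - (-c - b) := by abel
          rw [this, e, h, sub_self]
    rw [t0, tsucc]
    split_ifs with h
    · exact h
    · simp only [map_sub, map_neg] at h ⊢
      exact key _ _ _ hb hb' h

end Gens

section Main
variable {G H K : Type*} [AddCommGroup G] [AddCommGroup H] [AddCommGroup K]

/-- The colour of a pair of vertices. -/
def colFun (φ : G →+ K) (ψ : H →+ K) (f : G → Fin 4) (h : H → Fin 4) (c : K → Fin 4) :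
    G ⊕ H → G ⊕ H → Fin 4
  | Sum.inl x, Sum.inl y => f (x - y)
  | Sum.inr x, Sum.inr y => h (x - y)
  | Sum.inl x, Sum.inr y => c (φ x - ψ y)
  | Sum.inr y, Sum.inl x => c (φ x - ψ y)

/-- The group of pairs of translations. -/
def IsPair (φ : G →+ K) (ψ : H →+ K) (σ : Equiv.Perm (G ⊕ H)) : Prop :=
  ∃ g h, φ g = ψ h ∧ (∀ x, σ (Sum.inl x) = Sum.inl (g + x)) ∧ ∀ y, σ (Sum.inr y) = Sum.inr (h + y)

theorem assemble [Finite G] (φ : G →+ K) (ψ : H →+ K) (f : G → Fin 4) (h : H → Fin 4)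
    (c : K → Fin 4) (hf : ∀ d, f (-d) = f d) (hh : ∀ d, h (-d) = h d)
    (hsep : ∀ σ : Equiv.Perm (G ⊕ H),
      (∀ x y, x ≠ y → colFun φ ψ f h c (σ x) (σ y) = colFun φ ψ f h c x y) →
      ∀ x y, σ (Sum.inl x) ≠ Sum.inr y)
    (hrig : ∀ (α : G → G) (β : H → H), Function.Injective α → Function.Injective β →
      (∀ x y, x ≠ y → f (α x - α y) = f (x - y)) →
      (∀ x y, x ≠ y → h (β x - β y) = h (x - y)) →
      (∀ x y, c (φ (α x) - ψ (β y)) = c (φ x - ψ y)) →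
      ∃ g h, φ g = ψ h ∧ (∀ x, α x = g + x) ∧ ∀ y, β y = h + y) :
    ∃ γ : Sym2 (G ⊕ H) → Fin 4, ∀ σ : Equiv.Perm (G ⊕ H),
      IsPair φ ψ σ ↔ ∀ x y, x ≠ y → γ s(σ x, σ y) = γ s(x, y) := by
  have symm : ∀ x y, colFun φ ψ f h c x y = colFun φ ψ f h c y x := by
    rintro (x | x) (y | y)
    · change f (x - y) = f (y - x)
      rw [← hf, neg_sub]
    · rfl
    · rfl
    · change h (x - y) = h (y - x)
      rw [← hh, neg_sub]
  refine ⟨Sym2.lift ⟨colFun φ ψ f h c, symm⟩, fun σ => ⟨?_, ?_⟩⟩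
  · rintro ⟨g, k, hgk, h1, h2⟩ (x | x) (y | y) - <;> simp only [h1, h2, Sym2.lift_mk, colFun]
    · congr 1; abel
    · congr 1; rw [map_add, map_add, hgk]; abel
    · congr 1; rw [map_add, map_add, hgk]; abel
    · congr 1; abel
  · intro hσ
    simp only [Sym2.lift_mk] at hσ
    have hl : ∀ x, ∃ x', σ (Sum.inl x) = Sum.inl x' := by
      intro x
      rcases hx : σ (Sum.inl x) with x' | y
      · exact ⟨x', rfl⟩
      · exact absurd hx (hsep σ hσ x y)
    choose α hα using hl
    have αinj : Function.Injective α := by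
      intro x y hxy
      have : σ (Sum.inl x) = σ (Sum.inl y) := by rw [hα, hα, hxy]
      simpa using this
    have αsurj := Finite.surjective_of_injective αinj
    have hr : ∀ y, ∃ y', σ (Sum.inr y) = Sum.inr y' := by
      intro y
      rcases hy : σ (Sum.inr y) with x | y'
      · exfalso
        obtain ⟨x', rfl⟩ := αsurj x
        rw [← hα] at hy
        simpa using σ.injective hy
      · exact ⟨y', rfl⟩
    choose β hβ using hr
    have βinj : Function.Injective β := by
      intro x y hxy
      have : σ (Sum.inr x) = σ (Sum.inr y) := by rw [hβ, hβ, hxy]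
      simpa using this
    obtain ⟨g, k, hgk, h1, h2⟩ := hrig α β αinj βinj
      (fun x y hxy => by
        have := hσ (Sum.inl x) (Sum.inl y) (by simpa using hxy)
        simpa only [hα, colFun] using this)
      (fun x y hxy => by
        have := hσ (Sum.inr x) (Sum.inr y) (by simpa using hxy)
        simpa only [hβ, colFun] using this)
      (fun x y => by
        have := hσ (Sum.inl x) (Sum.inr y) (by simp)
        simpa only [hα, hβ, colFun] using this)
    exact ⟨g, k, hgk, fun x => by rw [hα, h1], fun y => by rw [hβ, h2]⟩

/-- The case where the common factor has exponent greater than two. -/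
theorem main_one [Finite G] [Finite H] (φ : G →+ K) (ψ : H →+ K)
    (hφ : Function.Surjective φ) (hψ : Function.Surjective ψ) (a : K) (ha : a + a ≠ 0) :
    ∃ γ : Sym2 (G ⊕ H) → Fin 4, ∀ σ : Equiv.Perm (G ⊕ H),
      IsPair φ ψ σ ↔ ∀ x y, x ≠ y → γ s(σ x, σ y) = γ s(x, y) := by
  classical
  obtain ⟨x0, hx0⟩ := hφ a
  obtain ⟨y0, hy0⟩ := hψ a
  obtain ⟨m, s, s1, s2, s3⟩ := exists_gens_double φ (x := x0) (by rw [hx0]; exact ha)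
  obtain ⟨n, t', t1', t2', t3'⟩ := exists_gens_double ψ (x := y0) (by rw [hy0]; exact ha)
  obtain ⟨t, t1, t2, t3, t4⟩ := adjust ψ t1' t2' t3'
  have hm : 0 < m := by
    by_contra hm
    have : {x | ∃ i < m, x = s i} = (∅ : Set G) := by
      ext x; simp only [Set.mem_ofPred_eq, Set.mem_empty_iff_false, iff_false]
      rintro ⟨i, hi, -⟩; omega
    rw [this, AddSubgroup.closure_empty] at s3
    have h0 : x0 ∈ (⊥ : AddSubgroup G) := by rw [s3]; trivial
    rw [AddSubgroup.mem_bot] at h0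
    apply ha; rw [← hx0, h0, map_zero, add_zero]
  have hn : NoInv s m := Or.inl (fun i hi h => s1 i hi (by rw [← map_add, h, map_zero]))
  have a0 : a ≠ 0 := by rintro rfl; simp at ha
  let c : K → Fin 4 := fun k => if k = 0 then 0 else if k = a then 1 else 2
  have c0 : ∀ k, c k = c 0 → k = 0 := by
    intro k hk
    by_contra h
    simp only [c, if_neg h, if_true] at hk
    split_ifs at hk <;> simp at hk
  have ca : ∀ k, c k = c a → k = a := by
    intro k hk
    by_contra h
    simp only [c, if_neg a0, if_neg h, if_true] at hk
    split_ifs at hk <;> simp at hk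
  have c3 : ∀ k, c k ≠ 3 := by
    intro k; simp only [c]; split_ifs <;> simp
  refine assemble φ ψ (role s m 3) (role t n 2) c (role_neg _ _ _) (role_neg _ _ _) ?_ ?_
  · intro σ hσ x y hxy
    have hne : s 0 ≠ 0 := irr_ne_zero s2 hm
    have h := hσ (Sum.inl (s 0 + x)) (Sum.inl x) (by simpa using hne)
    have h' : colFun φ ψ (role s m 3) (role t n 2) c (Sum.inl (s 0 + x)) (Sum.inl x) = 3 := by
      simp only [colFun, add_sub_cancel_right]
      exact role_zero_idx hm
    rw [h', hxy] at h
    rcases hz : σ (Sum.inl (s 0 + x)) with z | z <;> rw [hz] at h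
    · exact c3 _ h
    · exact role_two_ne_three _ h
  · intro α β αi βi hα hβ hc
    obtain ⟨ε, hε, h⟩ := rigid s2 hn s3 α αi hα
    have hb : ∀ x y, φ x = ψ y → ψ (β y) = φ (α 0) + ε • ψ y := by
      intro x y hxy
      have := hc x y
      rw [hxy, sub_self] at this
      have := sub_eq_zero.mp (c0 _ this)
      rw [← this, h x, map_add, map_zsmul, hxy]
    have hb : ∀ y, ψ (β y) = φ (α 0) + ε • ψ y := fun y => by
      obtain ⟨x, hx⟩ := hφ (ψ y)
      exact hb x y hx
    have hε1 : ε = 1 := by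
      rcases hε with rfl | rfl
      · rfl
      · exfalso
        have := hc x0 0
        rw [hb, h, map_add, map_zsmul, hx0, map_zero, smul_zero, add_zero, sub_zero,
          add_sub_cancel_left] at this
        have := ca _ this
        rw [neg_one_smul] at this
        apply ha
        nth_rewrite 1 [← this]
        exact neg_add_cancel a
    subst hε1
    have hb' := rel_rigid ψ t2 t1 t4 t3 β βi hβ (fun x y => by
      rw [hb, hb, map_add, one_smul, one_smul, add_assoc])
    refine ⟨α 0, β 0, ?_, fun x => by rw [h x, one_smul], hb'⟩
    have := hb 0
    rw [this]; simp

/-- A coloring of an elementary abelian 2-group, no vertex having exactly one 3-neighbour. -/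
theorem exists_perm_two [Finite H] (hH : ∀ y : H, y + y = 0) :
    ∃ (n : ℕ) (t : ℕ → H) (π : Equiv.Perm (Fin 4)), Irr t n ∧
      AddSubgroup.closure {x | ∃ i < n, x = t i} = ⊤ ∧
      ¬ ∃! d, d ≠ 0 ∧ π (role t n 3 d) = 3 := by
  have hneg : ∀ y : H, -y = y := fun y => (eq_neg_of_add_eq_zero_left (hH y)).symm
  obtain ⟨n, t, -, t2, t3⟩ := exists_gens (Set.univ : Set H) AddSubgroup.closure_univ
  by_cases hn : n = 2
  · subst hn
    refine ⟨2, t, Equiv.swap 0 3, t2, t3, ?_⟩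
    rintro ⟨d, ⟨hd0, hd⟩, -⟩
    replace hd : role t 2 3 d = 0 := by
      have := congrArg (Equiv.swap (0 : Fin 4) 3) hd
      simpa using this
    have hmem : d = 0 ∨ d = t 0 ∨ d = t 1 ∨ d = t 0 - t 1 := by
      have hg : d ∈ AddSubgroup.closure {x | ∃ i < 2, x = t i} := by rw [t3]; trivial
      clear hd hd0
      have h0 := hH (t 0)
      have h1 := hH (t 1)
      have hsub : ∀ x y : H, x - y = x + y := fun x y => by rw [sub_eq_add_neg, hneg]
      rw [hsub]
      induction hg using AddSubgroup.closure_induction with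
      | mem y hy =>
        obtain ⟨i, hi, rfl⟩ := hy
        interval_cases i <;> simp
      | zero => simp
      | add a b _ _ ha hb =>
        have e1 : t 0 + (t 0 + t 1) = t 1 := by rw [← add_assoc, h0, zero_add]
        have e2 : t 1 + (t 0 + t 1) = t 0 := by rw [add_left_comm, h1, add_zero]
        have e3 : (t 0 + t 1) + t 0 = t 1 := by rw [add_comm, e1]
        have e4 : (t 0 + t 1) + t 1 = t 0 := by rw [add_comm, e2]
        have e5 : t 1 + t 0 = t 0 + t 1 := add_comm _ _
        rcases ha with rfl | rfl | rfl | rfl <;> rcases hb with rfl | rfl | rfl | rfl <;>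
          simp [h0, h1, e1, e2, e3, e4, e5, hH]
      | neg a _ ha => rw [hneg]; exact ha
    unfold role at hd
    split_ifs at hd with r1 r2 r3
    · simp at hd
    · simp at hd
    · simp at hd
    · rcases hmem with h | h | h | h
      · exact hd0 h
      · exact r2 ⟨0, by omega, Or.inl h⟩
      · exact r2 ⟨1, by omega, Or.inl h⟩
      · exact r3 ⟨0, by omega, Or.inl h⟩
  · refine ⟨n, t, Equiv.swap 1 3, t2, t3, ?_⟩
    have conv : ∀ d, Equiv.swap (1 : Fin 4) 3 (role t n 3 d) = 3 ↔ role t n 3 d = 1 := by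
      intro d
      rw [← Equiv.eq_symm_apply]; simp
    simp only [conv]
    rintro ⟨d, ⟨hd0, hd⟩, hu⟩
    obtain ⟨i, hi0, hi, hdi⟩ := role_eq_one (Or.inr rfl) hd
    have e1 := hu (t 1) ⟨irr_ne_zero t2 (by omega), role_idx t2 (by omega) (by omega)⟩
    have e2 := hu (t 2) ⟨irr_ne_zero t2 (by omega), role_idx t2 (by omega) (by omega)⟩
    exact irr_ne t2 (j := 1) (k := 2) (by omega) (by omega) (by omega) (Or.inl (e2.trans e1.symm))

/-- The elementary abelian case. -/
theorem main_two [Finite G] [Finite H] [Nontrivial G] (φ : G →+ K) (ψ : H →+ K)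
    (hG : ∀ x : G, x + x = 0) (hH : ∀ y : H, y + y = 0) :
    ∃ γ : Sym2 (G ⊕ H) → Fin 4, ∀ σ : Equiv.Perm (G ⊕ H),
      IsPair φ ψ σ ↔ ∀ x y, x ≠ y → γ s(σ x, σ y) = γ s(x, y) := by
  classical
  have hneg : ∀ y : G, -y = y := fun y => (eq_neg_of_add_eq_zero_left (hG y)).symm
  have hnegH : ∀ y : H, -y = y := fun y => (eq_neg_of_add_eq_zero_left (hH y)).symm
  obtain ⟨m, s, -, s2, s3⟩ := exists_gens (Set.univ : Set G) AddSubgroup.closure_univ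
  obtain ⟨n, t, π, t2, t3, t4⟩ := exists_perm_two hH
  have hm : 0 < m := by
    by_contra hm
    have : {x | ∃ i < m, x = s i} = (∅ : Set G) := by
      ext x; simp only [Set.mem_ofPred_eq, Set.mem_empty_iff_false, iff_false]
      rintro ⟨i, hi, -⟩; omega
    rw [this, AddSubgroup.closure_empty] at s3
    exact bot_ne_top s3
  let c : K → Fin 4 := fun k => if k = 0 then 0 else 1
  have c0 : ∀ k, c k = c 0 → k = 0 := by
    intro k hk
    by_contra h
    simp [c, if_neg h] at hk
  have c3 : ∀ k, c k ≠ 3 := by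
    intro k; simp only [c]; split_ifs <;> simp
  refine assemble φ ψ (role s m 3) (fun d => π (role t n 3 d)) c (role_neg _ _ _)
    (fun d => by rw [role_neg]) ?_ ?_
  · intro σ hσ x y hxy
    apply t4
    have hne : s 0 ≠ 0 := irr_ne_zero s2 hm
    have h := hσ (Sum.inl (s 0 + x)) (Sum.inl x) (by simpa using hne)
    have h' : colFun φ ψ (role s m 3) (fun d => π (role t n 3 d)) c
        (Sum.inl (s 0 + x)) (Sum.inl x) = 3 := by
      simp only [colFun, add_sub_cancel_right]
      exact role_zero_idx hm
    rw [h', hxy] at h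
    rcases hz : σ (Sum.inl (s 0 + x)) with z | z <;> rw [hz] at h
    · exact absurd h (c3 _)
    · simp only [colFun] at h
      refine ⟨z - y, ⟨?_, h⟩, ?_⟩
      · intro h0
        rw [sub_eq_zero] at h0
        rw [h0, ← hxy] at hz
        simpa [hne] using σ.injective hz
      · rintro d ⟨hd0, hd⟩
        obtain ⟨w, hw⟩ := σ.surjective (Sum.inr (d + y))
        have hwx : w ≠ Sum.inl x := by
          rintro rfl
          rw [hxy] at hw
          simp only [Sum.inr.injEq, right_eq_add] at hw
          exact hd0 hw
        have := hσ w (Sum.inl x) hwx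
        rw [hw, hxy] at this
        simp only [colFun, add_sub_cancel_right] at this
        rw [hd] at this
        rcases w with w | w
        · simp only at this
          obtain ⟨-, e⟩ := role_eq_three this.symm
          rw [hneg, or_self, sub_eq_iff_eq_add] at e
          rw [e, hz] at hw
          simp only [Sum.inr.injEq] at hw
          rw [hw]; abel
        · exact absurd this.symm (c3 _)
  · intro α β αi βi hα hβ hc
    obtain ⟨ε, hε, h⟩ := rigid s2 (Or.inr hG) s3 α αi hα
    obtain ⟨δ, hδ, k⟩ := rigid t2 (Or.inr hH) t3 β βi
      (fun x y hxy => π.injective (hβ x y hxy))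
    have h : ∀ x, α x = α 0 + x := by
      intro x; rw [h x]; rcases hε with rfl | rfl
      · rw [one_smul]
      · rw [neg_one_smul, hneg]
    have k : ∀ x, β x = β 0 + x := by
      intro x; rw [k x]; rcases hδ with rfl | rfl
      · rw [one_smul]
      · rw [neg_one_smul, hnegH]
    refine ⟨α 0, β 0, ?_, h, k⟩
    have := hc 0 0
    rw [map_zero, map_zero, sub_zero] at this
    exact sub_eq_zero.mp (c0 _ this)

end Main

/-- Transfer to an action of an abelian group with two orbits. -/
theorem transfer {B X : Type*} [CommGroup B] [MulAction B X] [Finite B] (x y : X)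
    (hxy : ∀ b : B, b • x ≠ y) (hcov : ∀ z, (∃ b : B, b • x = z) ∨ ∃ b : B, b • y = z)
    (hx : ∃ b : B, b • x ≠ x)
    (hcond : (∀ b : B, b * b ∈ MulAction.stabilizer B x ⊔ MulAction.stabilizer B y) →
      ∀ b : B, b * b ∈ MulAction.stabilizer B x ∧ b * b ∈ MulAction.stabilizer B y) :
    ∃ γ : Sym2 X → Fin 4, ∀ σ : Equiv.Perm X,
      (∃ b : B, ∀ z, σ z = b • z) ↔ ∀ x y, x ≠ y → γ s(σ x, σ y) = γ s(x, y) := by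
  set P := MulAction.stabilizer B x with hP
  set Q := MulAction.stabilizer B y with hQ
  let φ : Additive (B ⧸ P) →+ Additive (B ⧸ (P ⊔ Q)) :=
    MonoidHom.toAdditive (QuotientGroup.map P (P ⊔ Q) (MonoidHom.id B) (le_sup_left))
  let ψ : Additive (B ⧸ Q) →+ Additive (B ⧸ (P ⊔ Q)) :=
    MonoidHom.toAdditive (QuotientGroup.map Q (P ⊔ Q) (MonoidHom.id B) (le_sup_right))
  let mP : B → Additive (B ⧸ P) := fun b => Additive.ofMul (b : B ⧸ P)
  let mQ : B → Additive (B ⧸ Q) := fun b => Additive.ofMul (b : B ⧸ Q)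
  let mK : B → Additive (B ⧸ (P ⊔ Q)) := fun b => Additive.ofMul (b : B ⧸ (P ⊔ Q))
  have sP : ∀ g, ∃ b, mP b = g := fun g => QuotientGroup.mk_surjective (Additive.toMul g)
  have sQ : ∀ g, ∃ b, mQ b = g := fun g => QuotientGroup.mk_surjective (Additive.toMul g)
  have sK : ∀ g, ∃ b, mK b = g := fun g => QuotientGroup.mk_surjective (Additive.toMul g)
  have hφ : ∀ b, φ (mP b) = mK b := fun b => rfl
  have hψ : ∀ b, ψ (mQ b) = mK b := fun b => rfl
  have aP : ∀ b c, mP (b * c) = mP b + mP c := fun b c => rfl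
  have aQ : ∀ b c, mQ (b * c) = mQ b + mQ c := fun b c => rfl
  have aK : ∀ b c, mK (b * c) = mK b + mK c := fun b c => rfl
  have zP : ∀ b, mP b = 0 ↔ b ∈ P := fun b => QuotientGroup.eq_one_iff b
  have zQ : ∀ b, mQ b = 0 ↔ b ∈ Q := fun b => QuotientGroup.eq_one_iff b
  have zK : ∀ b, mK b = 0 ↔ b ∈ P ⊔ Q := fun b => QuotientGroup.eq_one_iff b
  let eP : Additive (B ⧸ P) → X := fun g => MulAction.ofQuotientStabilizer B x (Additive.toMul g)
  let eQ : Additive (B ⧸ Q) → X := fun g => MulAction.ofQuotientStabilizer B y (Additive.toMul g)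
  have hePb : ∀ b, eP (mP b) = b • x := fun b => rfl
  have heQb : ∀ b, eQ (mQ b) = b • y := fun b => rfl
  have hePa : ∀ b g, eP (mP b + g) = b • eP g := by
    intro b g
    obtain ⟨c, rfl⟩ := sP g
    rw [← aP, hePb, hePb, mul_smul]
  have heQa : ∀ b g, eQ (mQ b + g) = b • eQ g := by
    intro b g
    obtain ⟨c, rfl⟩ := sQ g
    rw [← aQ, heQb, heQb, mul_smul]
  have bij : Function.Bijective (Sum.elim eP eQ) := by
    constructor
    · have hne : ∀ g h, eP g ≠ eQ h := by
        intro g h e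
        obtain ⟨b, rfl⟩ := sP g
        obtain ⟨c, rfl⟩ := sQ h
        rw [hePb, heQb] at e
        apply hxy (c⁻¹ * b)
        rw [mul_smul, e, inv_smul_smul]
      rintro (g | g) (h | h) e
      · exact congrArg _ (MulAction.injective_ofQuotientStabilizer B x e)
      · exact absurd e (hne g h)
      · exact absurd e.symm (hne h g)
      · exact congrArg _ (MulAction.injective_ofQuotientStabilizer B y e)
    · intro z
      rcases hcov z with ⟨b, rfl⟩ | ⟨b, rfl⟩
      · exact ⟨Sum.inl (mP b), rfl⟩
      · exact ⟨Sum.inr (mQ b), rfl⟩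
  let e := Equiv.ofBijective _ bij
  have el : ∀ g, e (Sum.inl g) = eP g := fun g => rfl
  have er : ∀ g, e (Sum.inr g) = eQ g := fun g => rfl
  have main : ∃ γ : Sym2 (Additive (B ⧸ P) ⊕ Additive (B ⧸ Q)) → Fin 4,
      ∀ σ : Equiv.Perm (Additive (B ⧸ P) ⊕ Additive (B ⧸ Q)),
      IsPair φ ψ σ ↔ ∀ x y, x ≠ y → γ s(σ x, σ y) = γ s(x, y) := by
    have : Finite (Additive (B ⧸ P)) := inferInstanceAs (Finite (B ⧸ P))
    have : Finite (Additive (B ⧸ Q)) := inferInstanceAs (Finite (B ⧸ Q))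
    by_cases hK : ∀ k : Additive (B ⧸ (P ⊔ Q)), k + k = 0
    · have hb := hcond (fun b => by rw [← zK, aK]; exact hK _)
      obtain ⟨b, hb0⟩ := hx
      have : Nontrivial (Additive (B ⧸ P)) := ⟨mP b, 0, fun h => hb0 ((zP b).mp h)⟩
      refine main_two φ ψ (fun g => ?_) (fun g => ?_)
      · obtain ⟨b, rfl⟩ := sP g
        rw [← aP, zP]; exact (hb b).1
      · obtain ⟨b, rfl⟩ := sQ g
        rw [← aQ, zQ]; exact (hb b).2
    · push Not at hK
      obtain ⟨a, ha⟩ := hK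
      refine main_one φ ψ (fun k => ?_) (fun k => ?_) a ha
      · obtain ⟨b, rfl⟩ := sK k
        exact ⟨mP b, rfl⟩
      · obtain ⟨b, rfl⟩ := sK k
        exact ⟨mQ b, rfl⟩
  obtain ⟨γ, hγ⟩ := main
  refine ⟨fun p => γ (p.map e.symm), fun σ => ?_⟩
  have h1 : (∃ b : B, ∀ z, σ z = b • z) ↔ IsPair φ ψ ((e.trans σ).trans e.symm) := by
    constructor
    · rintro ⟨b, hb⟩
      refine ⟨mP b, mQ b, rfl, fun g => ?_, fun g => ?_⟩
      · simp only [Equiv.trans_apply]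
        rw [Equiv.symm_apply_eq, hb, el, el, hePa]
      · simp only [Equiv.trans_apply]
        rw [Equiv.symm_apply_eq, hb, er, er, heQa]
    · rintro ⟨g, h, hgh, h1, h2⟩
      obtain ⟨b1, rfl⟩ := sP g
      obtain ⟨b2, rfl⟩ := sQ h
      rw [hφ, hψ] at hgh
      have hmem : b1⁻¹ * b2 ∈ P ⊔ Q := QuotientGroup.eq.mp hgh
      obtain ⟨p, hp, q, hq, hpq⟩ := Subgroup.mem_sup.mp hmem
      have e1 : mP (b1 * p) = mP b1 := by rw [aP, (zP p).mpr hp, add_zero]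
      have e2 : mQ (b1 * p) = mQ b2 := by
        have : b2 = (b1 * p) * q := by rw [mul_assoc, hpq, mul_inv_cancel_left]
        rw [this, aQ _ q, (zQ q).mpr hq, add_zero]
      refine ⟨b1 * p, fun z => ?_⟩
      obtain ⟨w, rfl⟩ := e.surjective z
      rcases w with w | w
      · have := h1 w
        simp only [Equiv.trans_apply] at this
        rw [Equiv.symm_apply_eq] at this
        rw [this, el, el, ← e1, hePa]
      · have := h2 w
        simp only [Equiv.trans_apply] at this
        rw [Equiv.symm_apply_eq] at this
        rw [this, er, er, ← e2, heQa]
  rw [h1, hγ]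
  constructor
  · intro h u v huv
    have := h (e.symm u) (e.symm v) (by simpa using huv)
    simpa using this
  · intro h u v huv
    have := h (e u) (e v) (by simpa using huv)
    simpa using this

end ColAb

/-- A nontrivial abelian subgroup `A ≤ Sym(X)` with exactly two orbits, such that for
every orbit `O`, if `A_O / A_O^*` is an elementary abelian 2-group then so is `A_O`,
is the automorphism group of a 4-coloured graph on `X`. -/
theorem statement5 (X : Type*) [Fintype X] (A : Subgroup (Equiv.Perm X))
    (hnt : A ≠ ⊥) (hab : ∀ a ∈ A, ∀ b ∈ A, a * b = b * a)
    (h2 : ∃ x y : X, orbitOf (A : Set (Equiv.Perm X)) x ≠ orbitOf (A : Set (Equiv.Perm X)) y ∧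
      ∀ z : X, orbitOf (A : Set (Equiv.Perm X)) z = orbitOf (A : Set (Equiv.Perm X)) x ∨
        orbitOf (A : Set (Equiv.Perm X)) z = orbitOf (A : Set (Equiv.Perm X)) y)
    (hcond : ∀ x : X, FactorIsElem2 A (orbitOf (A : Set (Equiv.Perm X)) x) →
      ∀ a ∈ A, ∀ z ∈ orbitOf (A : Set (Equiv.Perm X)) x, a (a z) = z) :
    InGR4 A := by
  letI : CommGroup A := { (inferInstance : Group A) with
    mul_comm := fun a b => Subtype.ext (hab a a.2 b b.2) }
  have self : ∀ z, z ∈ orbitOf (A : Set (Equiv.Perm X)) z := fun z => ⟨1, A.one_mem, rfl⟩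
  have sm : ∀ (b : A) (z : X), b • z = (b : Equiv.Perm X) z := fun b z => rfl
  -- symmetric core
  have core : ∀ x y : X,
      orbitOf (A : Set (Equiv.Perm X)) x ≠ orbitOf (A : Set (Equiv.Perm X)) y →
      (∀ z : X, orbitOf (A : Set (Equiv.Perm X)) z = orbitOf (A : Set (Equiv.Perm X)) x ∨
        orbitOf (A : Set (Equiv.Perm X)) z = orbitOf (A : Set (Equiv.Perm X)) y) →
      (∃ b : A, b • x ≠ x) → InGR4 A := by
    intro x y hne hcov hx
    have hcov' : ∀ z, (∃ b : A, b • x = z) ∨ ∃ b : A, b • y = z := by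
      intro z
      rcases hcov z with h | h
      · left
        obtain ⟨a, ha, e⟩ : z ∈ orbitOf (A : Set (Equiv.Perm X)) x := h ▸ self z
        exact ⟨⟨a, ha⟩, e⟩
      · right
        obtain ⟨a, ha, e⟩ : z ∈ orbitOf (A : Set (Equiv.Perm X)) y := h ▸ self z
        exact ⟨⟨a, ha⟩, e⟩
    have key : ∀ x y : X, (∀ z, (∃ b : A, b • x = z) ∨ ∃ b : A, b • y = z) →
        (∀ b : A, b * b ∈ MulAction.stabilizer A x ⊔ MulAction.stabilizer A y) →
        ∀ b : A, b * b ∈ MulAction.stabilizer A x := by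
      intro x y hcov hb b
      rw [MulAction.mem_stabilizer_iff, mul_smul]
      refine hcond x ?_ b b.2 x (self x)
      intro a ha
      obtain ⟨p, hp, q, hq, hpq⟩ := Subgroup.mem_sup.mp (hb ⟨a, ha⟩)
      rw [MulAction.mem_stabilizer_iff] at hp hq
      refine ⟨q, q.2, ?_, ?_⟩
      · rintro z ⟨c, hc, rfl⟩
        change q • ((⟨c, hc⟩ : A) • x) = (⟨a, ha⟩ : A) • (⟨a, ha⟩ : A) • (⟨c, hc⟩ : A) • x
        rw [← mul_smul _ _ ((⟨c, hc⟩ : A) • x), ← hpq, ← mul_smul, ← mul_smul]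
        have : p * q * (⟨c, hc⟩ : A) = q * ⟨c, hc⟩ * p := by
          rw [mul_assoc, mul_comm]
        rw [this, mul_smul _ p, hp]
      · intro z hz
        rcases hcov z with ⟨b, rfl⟩ | ⟨b, rfl⟩
        · exact absurd ⟨b, b.2, rfl⟩ hz
        · change q • b • y = b • y
          rw [smul_comm, hq]
    obtain ⟨γ, hγ⟩ := ColAb.transfer (B := A) x y
      (by
        rintro b rfl
        apply hne
        ext z
        constructor
        · rintro ⟨a, ha, rfl⟩
          exact ⟨a * (b : Equiv.Perm X)⁻¹, A.mul_mem ha (A.inv_mem b.2), by simp [sm]⟩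
        · rintro ⟨a, ha, rfl⟩
          exact ⟨a * b, A.mul_mem ha b.2, rfl⟩)
      hcov' hx
      (fun hb b => ⟨key x y hcov' hb b, key y x (fun z => (hcov' z).symm)
        (fun b => by rw [sup_comm]; exact hb b) b⟩)
    refine ⟨γ, fun σ => ?_⟩
    rw [← hγ]
    constructor
    · intro h
      exact ⟨⟨σ, h⟩, fun z => rfl⟩
    · rintro ⟨b, hb⟩
      have : σ = b := Equiv.ext hb
      rw [this]; exact b.2
  obtain ⟨x, y, hne, hcov⟩ := h2
  by_cases hx : ∃ b : A, b • x ≠ x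
  · exact core x y hne hcov hx
  by_cases hy : ∃ b : A, b • y ≠ y
  · exact core y x hne.symm (fun z => (hcov z).symm) hy
  exfalso
  push Not at hx hy
  apply hnt
  rw [Subgroup.eq_bot_iff_forall]
  intro a ha
  ext z
  have fix : ∀ x : X, (∀ b : A, b • x = x) →
      orbitOf (A : Set (Equiv.Perm X)) z = orbitOf (A : Set (Equiv.Perm X)) x → a z = z := by
    intro x hx h
    obtain ⟨c, hc, rfl⟩ : z ∈ orbitOf (A : Set (Equiv.Perm X)) x := h ▸ self z
    have e1 : c x = x := hx ⟨c, hc⟩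
    rw [e1]; exact hx ⟨a, ha⟩
  rcases hcov z with h | h
  · exact fix x hx h
  · exact fix y hy h
end

section
/- Let X be a finite set and let A be a nontrivial abelian subgroup of Sym(X) such that: (1) A is 2-orbit-closed, and (2) for every orbit O of A, if the factor group A_O/A_O^* is an elementary abelian 2-group, then A_O is an elementary abelian 2-group (i.e., a(a(x)) = x for all a ∈ A and x ∈ O). Then A is the automorphism group of a 4-coloured graph on X (A ∈ GR(4)). -/
section Rigid
variable {G : Type*} [CommGroup G]

theorem minGen [Finite G] (K : Subgroup G) : ∃ (n : ℕ) (k : Fin n → G),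
    Subgroup.closure (Set.range k) = K ∧ ∀ i, k i ∉ Subgroup.closure (k '' {j | j ≠ i}) := by
  classical
  have hex : ∃ n : ℕ, ∃ k : Fin n → G, Subgroup.closure (Set.range k) = K := by
    obtain ⟨n, ⟨e⟩⟩ := Finite.exists_equiv_fin K
    refine ⟨n, fun i => (e.symm i : G), ?_⟩
    have : Set.range (fun i => (e.symm i : G)) = (K : Set G) := by
      ext x
      constructor
      · rintro ⟨i, rfl⟩
        exact (e.symm i).2
      · intro hx
        exact ⟨e ⟨x, hx⟩, by simp⟩
    rw [this, Subgroup.closure_eq]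
  obtain ⟨k, hk⟩ := Nat.find_spec hex
  refine ⟨Nat.find hex, k, hk, ?_⟩
  intro i hi
  rcases hn : Nat.find hex with _ | m
  · exact absurd i.2 (by omega)
  · have hlt : m < Nat.find hex := by omega
    apply Nat.find_min hex hlt
    let c : Fin (m + 1) ≃ Fin (Nat.find hex) := finCongr hn.symm
    refine ⟨fun j => k (c ((c.symm i).succAbove j)), ?_⟩
    have hr : Set.range (fun j => k (c ((c.symm i).succAbove j))) = k '' {j | j ≠ i} := by
      ext x
      constructor
      · rintro ⟨j, rfl⟩
        refine ⟨_, ?_, rfl⟩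
        intro h
        apply Fin.succAbove_ne (c.symm i) j
        exact c.injective (by simpa using h)
      · rintro ⟨j, hj, rfl⟩
        have : c.symm j ≠ c.symm i := by simpa using hj
        obtain ⟨l, hl⟩ := Fin.exists_succAbove_eq this
        exact ⟨l, by simp [hl]⟩
    rw [hr]
    apply le_antisymm
    · exact le_trans (Subgroup.closure_mono (Set.image_subset_range _ _)) hk.le
    · refine le_trans hk.ge ?_
      rw [Subgroup.closure_le]
      rintro _ ⟨j, rfl⟩
      by_cases h : j = i
      · rw [h]; exact hi
      · exact Subgroup.subset_closure ⟨j, h, rfl⟩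

def Indep {n : ℕ} (k : Fin n → G) : Prop :=
  ∀ i, k i ∉ Subgroup.closure (k '' {j | j ≠ i})

theorem Indep.mem {n : ℕ} {k : Fin n → G} {i j : Fin n} (h : j ≠ i) :
    k j ∈ Subgroup.closure (k '' {j | j ≠ i}) := Subgroup.subset_closure ⟨j, h, rfl⟩

theorem Indep.inj {n : ℕ} {k : Fin n → G} (hk : Indep k) {i j : Fin n} (h : k i = k j) : i = j := by
  by_contra hne
  exact hk i (h ▸ Indep.mem (Ne.symm hne))

theorem Indep.ne_one {n : ℕ} {k : Fin n → G} (hk : Indep k) (i : Fin n) : k i ≠ 1 := by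
  intro h
  exact hk i (h ▸ one_mem _)

theorem Indep.inj_inv {n : ℕ} {k : Fin n → G} (hk : Indep k) {i j : Fin n}
    (h : k i = (k j)⁻¹) : i = j := by
  by_contra hne
  exact hk i (h ▸ inv_mem (Indep.mem (Ne.symm hne)))

theorem Indep.pair {n : ℕ} {k : Fin n → G} (hk : Indep k) {a b c d : Fin n} (hab : a ≠ b)
    (h : (k a)⁻¹ * k b = (k c)⁻¹ * k d) : (a = c ∧ b = d) ∨ (a = d ∧ b = c) := by
  have ha : a = c ∨ a = d := by
    by_contra hne
    push Not at hne
    have : k a = k b * (k d)⁻¹ * k c := by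
      have : k b = k a * ((k c)⁻¹ * k d) := by rw [← h]; group
      rw [this]; simp [mul_assoc]
    exact hk a (this ▸ mul_mem (mul_mem (Indep.mem hab.symm) (inv_mem (Indep.mem hne.2.symm)))
      (Indep.mem hne.1.symm))
  have hb : b = c ∨ b = d := by
    by_contra hne
    push Not at hne
    have : k b = k a * ((k c)⁻¹ * k d) := by rw [← h]; group
    exact hk b (this ▸ mul_mem (Indep.mem hab) (mul_mem (inv_mem (Indep.mem hne.1.symm))
      (Indep.mem hne.2.symm)))
  grind

theorem Indep.diff_ne {n : ℕ} {k : Fin n → G} (hk : Indep k) {a b c : Fin n} (hab : a ≠ b) :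
    (k a)⁻¹ * k b ≠ k c := by
  intro h
  have h' : k b = k a * k c := by rw [← h]; group
  by_cases hbc : b = c
  · subst hbc
    exact hk.ne_one a (by simpa using h')
  · exact hk b (h' ▸ mul_mem (Indep.mem hab) (Indep.mem (Ne.symm hbc)))

theorem Indep.diff_ne' {n : ℕ} {k : Fin n → G} (hk : Indep k) {a b c : Fin n} (hab : a ≠ b) :
    (k a)⁻¹ * k b ≠ (k c)⁻¹ := by
  intro h
  apply hk.diff_ne (c := c) hab.symm
  rw [← inv_inj, ← h]; group

/-- Links of the path. -/
def Lnk {n : ℕ} (k : Fin n → G) (d : G) : Prop :=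
  ∃ i j : Fin n, i.val + 1 = j.val ∧ (d = (k i)⁻¹ * k j ∨ d = (k j)⁻¹ * k i)

theorem Lnk.inv {n : ℕ} {k : Fin n → G} {d : G} (h : Lnk k d) : Lnk k d⁻¹ := by
  obtain ⟨i, j, hij, h⟩ := h
  refine ⟨i, j, hij, ?_⟩
  rcases h with h | h
  · right; rw [h]; group
  · left; rw [h]; group

theorem lnk_inv {n : ℕ} {k : Fin n → G} {d : G} : Lnk k d⁻¹ ↔ Lnk k d :=
  ⟨fun h => by simpa using h.inv, fun h => h.inv⟩

theorem Lnk.ne {n : ℕ} {k : Fin n → G} (hk : Indep k) {d : G} (h : Lnk k d) (c : Fin n) :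
    d ≠ k c ∧ d ≠ (k c)⁻¹ := by
  obtain ⟨i, j, hij, h⟩ := h
  have hne : i ≠ j := by intro h; rw [h] at hij; omega
  rcases h with h | h
  · rw [h]; exact ⟨hk.diff_ne hne, hk.diff_ne' hne⟩
  · rw [h]; exact ⟨hk.diff_ne hne.symm, hk.diff_ne' hne.symm⟩

theorem pathFix {n : ℕ} {k : Fin n → G} (hk : Indep k) (τ : G → G) (hτ : Function.Injective τ)
    (h1 : ∀ i, ∃ j, τ (k i) = k j) (h0 : ∀ i : Fin n, i.val = 0 → τ (k i) = k i)
    (h2 : ∀ i j : Fin n, i.val + 1 = j.val → Lnk k ((τ (k i))⁻¹ * τ (k j))) :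
    ∀ i, τ (k i) = k i := by
  have key : ∀ m : ℕ, ∀ i : Fin n, i.val = m → τ (k i) = k i := by
    intro m
    induction m using Nat.strong_induction_on with
    | _ m ih =>
      intro i hi
      rcases m with _ | m
      · exact h0 i hi
      · let p : Fin n := ⟨m, by omega⟩
        have hp : τ (k p) = k p := ih m (by omega) p rfl
        obtain ⟨l, hl⟩ := h1 i
        have hL := h2 p i (by simp [p, hi])
        rw [hp, hl] at hL
        have hpl : p ≠ l := by
          intro h
          rw [← h, ← hp] at hl
          have := hk.inj (hτ hl)
          rw [this] at hi
          simp [p] at hi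
        obtain ⟨a, b, hab, h⟩ := hL
        have hcase : p.val + 1 = l.val ∨ l.val + 1 = p.val := by
          rcases h with h | h
          · rcases hk.pair hpl h with ⟨rfl, rfl⟩ | ⟨rfl, rfl⟩ <;> omega
          · rcases hk.pair hpl h with ⟨rfl, rfl⟩ | ⟨rfl, rfl⟩ <;> omega
        rcases hcase with h | h
        · have : l = i := by apply Fin.ext; rw [hi, ← h]
          rw [hl, this]
        · exfalso
          have h3 : τ (k l) = k l := ih l.val (by simp [p] at h; omega) l rfl
          rw [← h3] at hl
          have := hk.inj (hτ hl)
          simp [p] at h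
          rw [← this] at h
          omega
  exact fun i => key i.val i rfl

structure Adm (κ : G → Fin 4) (R : G → Prop) (τ : G → G) : Prop where
  inj : Function.Injective τ
  col : ∀ x y, x ≠ y → κ ((τ x)⁻¹ * τ y) = κ (x⁻¹ * y)
  rel : ∀ x y, R ((τ x)⁻¹ * τ y) ↔ R (x⁻¹ * y)

theorem Adm.shift {κ : G → Fin 4} {R : G → Prop} {τ : G → G} (h : Adm κ R τ) (x : G) :
    Adm κ R (fun y => (τ x)⁻¹ * τ (x * y)) where
  inj := by
    intro a b hab
    simpa using h.inj (mul_left_cancel hab)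
  col := by
    intro a b hab
    have := h.col (x * a) (x * b) (by simpa using hab)
    rw [show (x * a)⁻¹ * (x * b) = a⁻¹ * b by group] at this
    rw [← this]; congr 1; group
  rel := by
    intro a b
    have := h.rel (x * a) (x * b)
    rw [show (x * a)⁻¹ * (x * b) = a⁻¹ * b by group] at this
    rw [← this, show ((τ x)⁻¹ * τ (x * a))⁻¹ * ((τ x)⁻¹ * τ (x * b)) =
      (τ (x * a))⁻¹ * τ (x * b) by group]

def RigidCol (κ : G → Fin 4) (R : G → Prop) : Prop :=
  ∀ τ, Adm κ R τ → ∀ x t, τ (x * t) = τ x * t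

theorem Adm.local_to_global {κ : G → Fin 4} {R : G → Prop} {s : G}
    (h : ∀ τ, Adm κ R τ → τ 1 = 1 → τ s = s) {τ : G → G} (hτ : Adm κ R τ) (x : G) :
    τ (x * s) = τ x * s := by
  have := h _ (hτ.shift x) (by simp)
  rw [inv_mul_eq_iff_eq_mul] at this
  exact this

theorem rigid_of_gen {κ : G → Fin 4} {R : G → Prop} (T : Set G)
    (hT : Subgroup.closure T = ⊤)
    (h : ∀ s ∈ T, ∀ τ, Adm κ R τ → τ 1 = 1 → τ s = s) : RigidCol κ R := by
  intro τ hτ x t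
  have ht : t ∈ Subgroup.closure T := by rw [hT]; trivial
  induction ht using Subgroup.closure_induction generalizing x with
  | mem s hs => exact Adm.local_to_global (h s hs) hτ x
  | one => simp
  | mul a b _ _ ha hb => rw [← mul_assoc, hb, ha, mul_assoc]
  | inv a _ ha =>
    have := ha (x * a⁻¹)
    rw [inv_mul_cancel_right] at this
    rw [this, mul_inv_cancel_right]

theorem RigidCol.weaken {κ : G → Fin 4} {R : G → Prop} (h : RigidCol κ (fun _ => True)) :
    RigidCol κ R := fun τ hτ => h τ ⟨hτ.inj, hτ.col, fun _ _ => Iff.rfl⟩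

theorem RigidCol.perm {κ : G → Fin 4} {R : G → Prop} (h : RigidCol κ R) (p : Equiv.Perm (Fin 4)) :
    RigidCol (fun x => p (κ x)) R :=
  fun τ hτ => h τ ⟨hτ.inj, fun x y hxy => p.injective (hτ.col x y hxy), hτ.rel⟩

open Classical in
theorem lemmaN [Finite G] (φ : G →* ℂˣ) (g : G) (hz : φ g * φ g ≠ 1)
    (hr : ∀ x, ∃ n : ℤ, φ x = φ g ^ n) :
    ∃ κ : G → Fin 4, (∀ x, κ x⁻¹ = κ x) ∧ (∀ x, κ x ≠ 3) ∧ RigidCol κ (fun d => φ d = φ g) := by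
  obtain ⟨n, k, hgen, hk⟩ := minGen φ.ker
  replace hk : Indep k := hk
  have hφk : ∀ i, φ (k i) = 1 := fun i => by
    have : k i ∈ φ.ker := hgen ▸ Subgroup.subset_closure ⟨i, rfl⟩
    exact this
  set ζ := φ g with hζ
  have hζ1 : ζ ≠ 1 := by intro h; apply hz; simp [h]
  have hζi : ζ⁻¹ ≠ ζ := by
    intro h; apply hz; nth_rewrite 1 [← h]; simp
  let u : G → Fin 4 := fun d =>
    if ∃ i : Fin n, i.val = 0 ∧ (d = k i ∨ d = (k i)⁻¹) then 2 else if Lnk k d then 1 else 0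
  let f : G → Fin 4 := fun d => if d = g then 1 else if ∃ i, d = g * k i then 2 else 0
  let κ : G → Fin 4 := fun d => if φ d = 1 then u d else if φ d = ζ then f d else
    if φ d = ζ⁻¹ then f d⁻¹ else 0
  have κ1 : ∀ d, φ d = 1 → κ d = u d := fun d h => by simp [κ, h]
  have κz : ∀ d, φ d = ζ → κ d = f d := fun d h => by simp [κ, h, hζ1]
  have κzi : ∀ d, φ d = ζ⁻¹ → κ d = f d⁻¹ := fun d h => by simp [κ, h, hζ1, hζi]
  refine ⟨κ, ?_, ?_, ?_⟩
  · intro x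
    by_cases h1 : φ x = 1
    · rw [κ1 x h1, κ1 x⁻¹ (by simp [h1])]
      simp only [u, lnk_inv, inv_eq_iff_eq_inv, inv_inv, or_comm]
    · by_cases h2 : φ x = ζ
      · rw [κz x h2, κzi x⁻¹ (by simp [h2]), inv_inv]
      · by_cases h3 : φ x = ζ⁻¹
        · rw [κzi x h3, κz x⁻¹ (by simp [h3])]
        · have h2' : (φ x)⁻¹ ≠ ζ⁻¹ := by simpa using h2
          have h3' : (φ x)⁻¹ ≠ ζ := by rwa [Ne, inv_eq_iff_eq_inv]
          simp [κ, h1, h2, h3, h3']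
  · intro x
    simp only [κ, u, f]
    split_ifs <;> decide
  · have Hg : ∀ τ, Adm κ (fun d => φ d = ζ) τ → τ 1 = 1 → τ g = g := by
      intro τ hτ h1
      have hr1 := (hτ.rel 1 g).2 (by simp [hζ])
      have hc := hτ.col 1 g (by intro h; apply hζ1; rw [hζ, ← h, map_one])
      simp only [h1, inv_one, one_mul] at hr1 hc
      rw [κz _ hr1, κz g hζ.symm] at hc
      simp only [f] at hc
      by_contra hne
      rw [if_neg hne] at hc
      split_ifs at hc <;> simp_all
    have Hk : ∀ τ, Adm κ (fun d => φ d = ζ) τ → τ 1 = 1 → ∀ i, τ (k i) = k i := by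
      intro τ hτ h1
      have hg := fun x => Adm.local_to_global Hg hτ x
      have hset : ∀ i, ∃ j, τ (k i) = k j := by
        intro i
        have hgi : φ (k i * g) = ζ := by simp [hφk, hζ]
        have hr1 := (hτ.rel 1 (k i * g)).2 (by simpa using hgi)
        have hc := hτ.col 1 (k i * g) (by intro h; rw [← h] at hgi; simp at hgi; exact hζ1 hgi.symm)
        simp only [h1, inv_one, one_mul] at hr1 hc
        rw [κz _ hr1, κz _ hgi, hg] at hc
        have h2 : f (k i * g) = 2 := by
          simp only [f]
          rw [if_neg (by simpa using hk.ne_one i), if_pos ⟨i, mul_comm _ _⟩]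
        rw [h2] at hc
        simp only [f] at hc
        split_ifs at hc with ha hb
        · simp at hc
        · obtain ⟨j, hj⟩ := hb
          refine ⟨j, ?_⟩
          rw [mul_comm] at hj
          exact mul_left_cancel hj
        · simp at hc
      apply pathFix hk τ hτ.inj hset
      · intro i hi
        obtain ⟨j, hj⟩ := hset i
        have hc := hτ.col 1 (k i) (hk.ne_one i).symm
        simp only [h1, inv_one, one_mul] at hc
        rw [hj, κ1 _ (hφk _), κ1 _ (hφk _)] at hc
        have : u (k i) = 2 := by
          simp only [u]; rw [if_pos ⟨i, hi, Or.inl rfl⟩]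
        rw [this] at hc
        simp only [u] at hc
        split_ifs at hc with ha hb
        · obtain ⟨l, hl, h⟩ := ha
          have hjl : j = l := h.elim hk.inj hk.inj_inv
          rw [hj, hjl]
          congr 1
          apply Fin.ext; omega
        · simp at hc
        · simp at hc
      · intro i j hij
        have hne : i ≠ j := by intro h; rw [h] at hij; omega
        obtain ⟨i', hi'⟩ := hset i
        obtain ⟨j', hj'⟩ := hset j
        have hc := hτ.col (k i) (k j) (fun h => hne (hk.inj h))
        rw [hi', hj', κ1 _ (by simp [hφk]), κ1 _ (by simp [hφk])] at hc
        have : u ((k i)⁻¹ * k j) = 1 := by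
          have hl : Lnk k ((k i)⁻¹ * k j) := ⟨i, j, hij, Or.inl rfl⟩
          simp only [u]
          rw [if_neg, if_pos hl]
          rintro ⟨c, -, h⟩
          have := hl.ne hk c
          tauto
        rw [this] at hc
        rw [hi', hj']
        simp only [u] at hc
        split_ifs at hc with ha hb
        · simp at hc
        · exact hb
        · simp at hc
    apply rigid_of_gen (insert g (Set.range k))
    · rw [eq_top_iff]
      intro x _
      obtain ⟨m, hm⟩ := hr x
      have hg : g ∈ Subgroup.closure (insert g (Set.range k)) :=
        Subgroup.subset_closure (Set.mem_insert _ _)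
      have hx : x * (g ^ m)⁻¹ ∈ φ.ker := by
        rw [MonoidHom.mem_ker]; simp [hm, hζ]
      rw [← hgen] at hx
      have hx2 := Subgroup.closure_mono (Set.subset_insert g (Set.range k)) hx
      have := mul_mem hx2 (zpow_mem hg m)
      simpa using this
    · intro s hs τ hτ h1
      rcases hs with rfl | ⟨i, rfl⟩
      · exact Hg τ hτ h1
      · exact Hk τ hτ h1 i

end Rigid
section Elem
variable {G : Type*} [CommGroup G]

def GoodE (κ : G → Fin 4) : Prop := (∀ x, κ x⁻¹ = κ x) ∧ RigidCol κ (fun _ => True)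

theorem GoodE.perm {κ : G → Fin 4} (h : GoodE κ) (p : Equiv.Perm (Fin 4)) :
    GoodE (fun x => p (κ x)) :=
  ⟨fun x => congrArg p (h.1 x), h.2.perm p⟩

theorem span_two (h2 : ∀ x : G, x * x = 1) {n : ℕ} (k : Fin n → G) (hn : n ≤ 2)
    (hgen : Subgroup.closure (Set.range k) = ⊤) (x : G) : x = 1 ∨ (∃ i, x = k i) ∨ Lnk k x := by
  have hinv : ∀ x : G, x⁻¹ = x := fun x => inv_eq_of_mul_eq_one_left (h2 x)
  have hcan : ∀ x y : G, x * (x * y) = y := fun x y => by rw [← mul_assoc, h2, one_mul]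
  have hL : ∀ i j : Fin n, i ≠ j → Lnk k (k i * k j) := by
    intro i j hij
    have : i.val ≠ j.val := fun h => hij (Fin.ext h)
    by_cases h : i.val + 1 = j.val
    · exact ⟨i, j, h, Or.inl (by rw [hinv])⟩
    · exact ⟨j, i, by omega, Or.inr (by rw [hinv])⟩
  have hL' : ∀ y, Lnk k y → ∃ i j : Fin n, i ≠ j ∧ y = k i * k j := by
    rintro y ⟨i, j, hij, h⟩
    have hne : i ≠ j := by intro h; rw [h] at hij; omega
    rcases h with h | h
    · exact ⟨i, j, hne, by rw [h, hinv]⟩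
    · exact ⟨j, i, hne.symm, by rw [h, hinv]⟩
  have h3 : ∀ a b c : Fin n, a ≠ b → c = a ∨ c = b := by
    intro a b c hab
    have : a.val ≠ b.val := fun h => hab (Fin.ext h)
    have := a.2; have := b.2; have := c.2
    by_cases h : c.val = a.val
    · exact Or.inl (Fin.ext h)
    · exact Or.inr (Fin.ext (by omega))
  have hm : ∀ (i : Fin n) (y : G), (y = 1 ∨ (∃ i, y = k i) ∨ Lnk k y) →
      (k i * y = 1 ∨ (∃ j, k i * y = k j) ∨ Lnk k (k i * y)) := by
    intro i y hy
    rcases hy with rfl | ⟨j, rfl⟩ | hy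
    · exact Or.inr (Or.inl ⟨i, by simp⟩)
    · by_cases hij : i = j
      · left; rw [hij, h2]
      · exact Or.inr (Or.inr (hL i j hij))
    · obtain ⟨a, b, hab, rfl⟩ := hL' y hy
      rcases h3 a b i hab with rfl | rfl
      · exact Or.inr (Or.inl ⟨b, hcan _ _⟩)
      · exact Or.inr (Or.inl ⟨a, by rw [mul_comm (k a), hcan]⟩)
  have hx : x ∈ Subgroup.closure (Set.range k) := by rw [hgen]; trivial
  induction hx using Subgroup.closure_induction with
  | mem x hx => obtain ⟨i, rfl⟩ := hx; exact Or.inr (Or.inl ⟨i, rfl⟩)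
  | one => exact Or.inl rfl
  | mul a b _ _ ha hb =>
    rcases ha with rfl | ⟨j, rfl⟩ | ha
    · rwa [one_mul]
    · exact hm j b hb
    · obtain ⟨i, j, hij, rfl⟩ := hL' a ha
      rw [mul_assoc]
      exact hm i _ (hm j b hb)
  | inv a _ ha => rwa [hinv]

open Classical in
theorem lemmaE [Finite G] (h2 : ∀ x : G, x * x = 1) :
    (∃ κ : G → Fin 4, GoodE κ ∧ ((∃ x : G, x ≠ 1) → ∃ x, x ≠ 1 ∧ κ x = 3)) ∧
    ((∃ κ : G → Fin 4, GoodE κ ∧ ∀ x, x ≠ 1 → κ x ≠ 3) ∨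
      ((∃ κ : G → Fin 4, GoodE κ ∧ ∀ x y, x ≠ 1 → y ≠ 1 → κ x = 3 → κ y = 3 → x = y) ∧
       (∃ κ : G → Fin 4, GoodE κ ∧ ∃ x y, x ≠ y ∧ x ≠ 1 ∧ y ≠ 1 ∧ κ x = 3 ∧ κ y = 3))) := by
  have hinv : ∀ x : G, x⁻¹ = x := fun x => inv_eq_of_mul_eq_one_left (h2 x)
  obtain ⟨n, k, hgen, hk⟩ := minGen (⊤ : Subgroup G)
  replace hk : Indep k := hk
  let κ : G → Fin 4 := fun d => if ∃ i : Fin n, i.val = 0 ∧ d = k i then 3 else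
    if ∃ i, d = k i then 1 else if Lnk k d then 2 else 0
  have hκ0 : ∀ i : Fin n, i.val = 0 → κ (k i) = 3 := fun i hi => by
    simp only [κ]; rw [if_pos ⟨i, hi, rfl⟩]
  have hκ0' : ∀ d, κ d = 3 → ∃ i : Fin n, i.val = 0 ∧ d = k i := by
    intro d hd
    simp only [κ] at hd
    split_ifs at hd with h
    · exact h
    all_goals simp at hd
  have hκ1 : ∀ i : Fin n, i.val ≠ 0 → κ (k i) = 1 := fun i hi => by
    simp only [κ]; rw [if_neg, if_pos ⟨i, rfl⟩]
    rintro ⟨j, hj, h⟩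
    rw [hk.inj h] at hi
    exact hi hj
  have hκ1' : ∀ d, κ d = 1 → ∃ i, d = k i := by
    intro d hd
    simp only [κ] at hd
    split_ifs at hd with h h'
    · simp at hd
    · exact h'
    all_goals simp at hd
  have hκ2 : ∀ d, Lnk k d → κ d = 2 := by
    intro d hd
    simp only [κ]
    rw [if_neg, if_neg, if_pos hd]
    · rintro ⟨j, h⟩
      exact (hd.ne hk j).1 h
    · rintro ⟨j, -, h⟩
      exact (hd.ne hk j).1 h
  have hκ2' : ∀ d, κ d = 2 → Lnk k d := by
    intro d hd
    simp only [κ] at hd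
    split_ifs at hd with h h' h''
    · simp at hd
    · simp at hd
    · exact h''
    · simp at hd
  have hgood : GoodE κ := by
    refine ⟨fun x => by rw [hinv], ?_⟩
    apply rigid_of_gen (Set.range k) hgen
    intro s hs τ hτ h1
    obtain ⟨i, rfl⟩ := hs
    have hc1 : ∀ i, κ (τ (k i)) = κ (k i) := by
      intro i
      have hc := hτ.col 1 (k i) (hk.ne_one i).symm
      simpa only [h1, inv_one, one_mul] using hc
    have h0 : ∀ i : Fin n, i.val = 0 → τ (k i) = k i := by
      intro i hi
      obtain ⟨j, hj, h⟩ := hκ0' _ ((hc1 i).trans (hκ0 i hi))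
      rw [h]; congr 1; apply Fin.ext; omega
    refine pathFix hk τ hτ.inj ?_ h0 ?_ i
    · intro i
      by_cases hi : i.val = 0
      · exact ⟨i, h0 i hi⟩
      · exact hκ1' _ ((hc1 i).trans (hκ1 i hi))
    · intro i j hij
      have hne : i ≠ j := by intro h; rw [h] at hij; omega
      apply hκ2'
      rw [hτ.col (k i) (k j) (fun h => hne (hk.inj h))]
      exact hκ2 _ ⟨i, j, hij, Or.inl rfl⟩
  refine ⟨⟨κ, hgood, ?_⟩, ?_⟩
  · rintro ⟨x, hx⟩
    rcases Nat.eq_zero_or_pos n with hn | hn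
    · exfalso
      subst hn
      rcases span_two h2 k (by omega) hgen x with h | ⟨i, _⟩ | ⟨i, _⟩
      · exact hx h
      · exact i.elim0
      · exact i.elim0
    · exact ⟨k ⟨0, hn⟩, hk.ne_one _, hκ0 _ rfl⟩
  · by_cases hn : n ≤ 2
    · left
      refine ⟨_, hgood.perm (Equiv.swap 0 3), ?_⟩
      intro x hx h
      have h0 : κ x = 0 := by
        rw [Equiv.apply_eq_iff_eq_symm_apply] at h
        simpa using h
      rcases span_two h2 k hn hgen x with h' | ⟨i, rfl⟩ | h'
      · exact hx h'
      · by_cases hi : i.val = 0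
        · rw [hκ0 i hi] at h0; simp at h0
        · rw [hκ1 i hi] at h0; simp at h0
      · rw [hκ2 x h'] at h0; simp at h0
    · right
      refine ⟨⟨κ, hgood, ?_⟩, ⟨_, hgood.perm (Equiv.swap 0 3), ?_⟩⟩
      · intro x y _ _ hx hy
        obtain ⟨i, hi, rfl⟩ := hκ0' x hx
        obtain ⟨j, hj, rfl⟩ := hκ0' y hy
        congr 1; apply Fin.ext; omega
      · have hz : ∀ d, (∀ i, d ≠ k i) → (¬ Lnk k d) → Equiv.swap (0 : Fin 4) 3 (κ d) = 3 := by
          intro d h1 h2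
          have : κ d = 0 := by
            simp only [κ]
            rw [if_neg, if_neg, if_neg h2]
            · rintro ⟨i, h⟩; exact h1 i h
            · rintro ⟨i, _, h⟩; exact h1 i h
          rw [this]; simp
        let a : Fin n := ⟨0, by omega⟩
        let b : Fin n := ⟨1, by omega⟩
        let c : Fin n := ⟨2, by omega⟩
        have hab : a ≠ b := by simp [a, b]
        have hac : a ≠ c := by simp [a, c]
        have hbc : b ≠ c := by simp [b, c]
        have habc : ∀ i, (k a)⁻¹ * k c * k b ≠ k i := by
          intro i h
          by_cases hi : i = b
          · rw [hi] at h
            exact hk.inj (i := c) (j := a) (by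
              have : (k a)⁻¹ * k c = 1 := by simpa using h
              exact (inv_mul_eq_one.1 this).symm) |> fun h => hac h.symm
          · have h' : k b = k i * (k c)⁻¹ * k a := by rw [← h]; simp [mul_comm, mul_assoc]
            exact hk b (h' ▸ mul_mem (mul_mem (Indep.mem hi) (inv_mem (Indep.mem hbc.symm)))
              (Indep.mem hab))
        refine ⟨(k a)⁻¹ * k c, (k a)⁻¹ * k c * k b, ?_, ?_, ?_, ?_, ?_⟩
        · intro h
          exact hk.ne_one b (by simpa using h.symm)
        · intro h
          exact hac (hk.inj (inv_mul_eq_one.1 h))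
        · intro h
          apply hk.diff_ne' (c := b) hac
          exact eq_inv_of_mul_eq_one_left h
        · apply hz
          · exact fun i => hk.diff_ne hac
          · rintro ⟨i, j, hij, h⟩
            rcases h with h | h
            · rcases hk.pair hac h with ⟨rfl, rfl⟩ | ⟨rfl, rfl⟩ <;> simp [a, c] at hij
            · rcases hk.pair hac h with ⟨rfl, rfl⟩ | ⟨rfl, rfl⟩ <;> simp [a, c] at hij
        · apply hz _ habc
          intro hL
          have : ∃ i j : Fin n, i ≠ j ∧ (k a)⁻¹ * k c * k b = (k i)⁻¹ * k j := by
            obtain ⟨i, j, hij, h⟩ := hL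
            have hne : i ≠ j := by intro h; rw [h] at hij; omega
            rcases h with h | h
            · exact ⟨i, j, hne, h⟩
            · exact ⟨j, i, hne.symm, h⟩
          obtain ⟨i, j, hij, h⟩ := this
          have hm : ∀ p q r : Fin n, k p * k q * k r = k i * k j → p ≠ q → p ≠ r → p = i ∨ p = j := by
            intro p q r h hpq hpr
            by_contra hne
            push Not at hne
            have h' : k p = k i * k j * (k r)⁻¹ * (k q)⁻¹ := by rw [← h]; simp [mul_assoc]
            exact hk p (h' ▸ mul_mem (mul_mem (mul_mem (Indep.mem hne.1.symm) (Indep.mem hne.2.symm))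
              (inv_mem (Indep.mem hpr.symm))) (inv_mem (Indep.mem hpq.symm)))
          rw [hinv, hinv] at h
          have e1 := hm a c b h hac hab
          have e2 := hm c a b (by rw [← h]; simp [mul_comm]) hac.symm hbc.symm
          have e3 := hm b a c (by rw [← h, mul_comm (k b), mul_assoc, mul_comm (k b), mul_assoc]) hab.symm hbc
          grind
end Elem
theorem exists_char {B : Type*} [CommGroup B] [Finite B] (N : Subgroup B) (a : B)
    (ha : a * a ∉ N) : ∃ (φ : B →* ℂˣ) (g : B), (∀ s ∈ N, φ s = 1) ∧ φ g * φ g ≠ 1 ∧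
      ∀ x, ∃ n : ℤ, φ x = φ g ^ n := by
  have h1 : ((a * a : B) : B ⧸ N) ≠ 1 := by
    rwa [Ne, QuotientGroup.eq_one_iff]
  obtain ⟨ψ, hψ⟩ := CommGroup.exists_apply_ne_one_of_hasEnoughRootsOfUnity (B ⧸ N) ℂ h1
  let φ : B →* ℂˣ := ψ.comp (QuotientGroup.mk' N)
  have hcyc : IsCyclic φ.range := by
    have : Finite φ.range := Finite.of_surjective φ.rangeRestrict φ.rangeRestrict_surjective
    infer_instance
  obtain ⟨⟨z, ⟨g, hg⟩⟩, hz⟩ := hcyc.exists_generator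
  have hr : ∀ x, ∃ n : ℤ, φ x = φ g ^ n := by
    intro x
    obtain ⟨n, hn⟩ := Subgroup.mem_zpowers_iff.1 (hz ⟨φ x, ⟨x, rfl⟩⟩)
    refine ⟨n, ?_⟩
    have := congrArg Subtype.val hn
    simp at this
    rw [hg, this]
  refine ⟨φ, g, ?_, ?_, hr⟩
  · intro s hs
    have : ((s : B) : B ⧸ N) = 1 := by rwa [QuotientGroup.eq_one_iff]
    simp [φ, this]
  · intro h
    obtain ⟨n, hn⟩ := hr a
    apply hψ
    change φ (a * a) = 1
    rw [map_mul, hn, ← mul_zpow, h, one_zpow]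

section Frame
variable {B : Type*} [CommGroup B] {X : Type*} [MulAction B X]

abbrev Om (B : Type*) [CommGroup B] (X : Type*) [MulAction B X] := MulAction.orbitRel.Quotient B X

noncomputable def pt (ω : Om B X) (a : B) : X := a • ω.out

def orb (B : Type*) [CommGroup B] {X : Type*} [MulAction B X] (x : X) : Om B X :=
  Quotient.mk'' x

noncomputable abbrev St (ω : Om B X) : Subgroup B := MulAction.stabilizer B (ω.out : X)

theorem orb_eq_iff {x y : X} : orb B x = orb B y ↔ x ∈ MulAction.orbit B y := by
  unfold orb
  rw [Quotient.eq'']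
  exact MulAction.orbitRel_apply

theorem orb_out (ω : Om B X) : orb B (ω.out : X) = ω := Quotient.out_eq' ω

theorem orb_smul (b : B) (x : X) : orb B (b • x) = orb B x :=
  orb_eq_iff.2 ⟨b, rfl⟩

theorem orb_pt (ω : Om B X) (a : B) : orb B (pt ω a) = ω := by
  rw [pt, orb_smul, orb_out]

theorem exists_coord (x : X) : ∃ a : B, pt (orb B x) a = x := by
  have : orb B x = orb B ((orb B x).out : X) := (orb_out _).symm
  obtain ⟨a, ha⟩ := orb_eq_iff.1 this
  exact ⟨a, ha⟩

noncomputable def co (B : Type*) [CommGroup B] {X : Type*} [MulAction B X] (x : X) : B :=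
  (exists_coord (B := B) x).choose

theorem pt_co (x : X) : pt (orb B x) (co B x) = x := (exists_coord (B := B) x).choose_spec

theorem pt_eq_iff (ω : Om B X) (a b : B) : pt ω a = pt ω b ↔ a⁻¹ * b ∈ St ω := by
  unfold pt
  rw [MulAction.mem_stabilizer_iff, mul_smul, inv_smul_eq_iff, eq_comm]

theorem smul_pt (ω : Om B X) (a b : B) : b • pt ω a = pt ω (b * a) := by
  simp [pt, mul_smul]

variable (p : Om B X → Om B X → B → Fin 4)

structure PatOk : Prop where
  symm : ∀ ω ω' d, p ω' ω d⁻¹ = p ω ω' d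
  stab : ∀ ω ω' s d, s ∈ St ω → p ω ω' (s * d) = p ω ω' d

noncomputable def gam (x y : X) : Fin 4 := p (orb B x) (orb B y) ((co B x)⁻¹ * co B y)

variable {p}

theorem PatOk.stab' (hp : PatOk p) (ω ω' : Om B X) (s d : B) (hs : s ∈ St ω') :
    p ω ω' (d * s) = p ω ω' d := by
  rw [← hp.symm, mul_inv_rev, hp.stab _ _ _ _ (inv_mem hs), hp.symm]

theorem gam_pt (hp : PatOk p) (ω ω' : Om B X) (a b : B) :
    gam p (pt ω a) (pt ω' b) = p ω ω' (a⁻¹ * b) := by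
  unfold gam
  have h1 := pt_co (B := B) (pt ω a)
  have h2 := pt_co (B := B) (pt ω' b)
  rw [orb_pt] at h1 h2 ⊢
  rw [orb_pt]
  rw [pt_eq_iff] at h1 h2
  have := hp.stab ω ω' _ ((co B (pt ω a))⁻¹ * co B (pt ω' b)) (inv_mem h1)
  rw [← hp.stab' ω ω' _ _ h2] at this
  rw [← this]
  congr 1
  group

theorem gam_symm (hp : PatOk p) (x y : X) : gam p x y = gam p y x := by
  unfold gam
  rw [← hp.symm]
  congr 1
  group

theorem gam_smul (hp : PatOk p) (b : B) (x y : X) : gam p (b • x) (b • y) = gam p x y := by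
  rw [← pt_co (B := B) x, ← pt_co (B := B) y, smul_pt, smul_pt, gam_pt hp, gam_pt hp]
  congr 1
  group

/-- gluing -/
theorem glue (hp : PatOk p)
    (hstar : ∀ ω ω' d, ω ≠ ω' → p ω ω' d = p ω ω' 1 → d ∈ St ω ⊔ St ω')
    (σ : Equiv.Perm X) (hσ : ∀ x y, x ≠ y → gam p (σ x) (σ y) = gam p x y)
    (ht : ∀ ω : Om B X, ∃ t : B, ∀ a, σ (pt ω a) = pt ω (t * a)) (x y : X) :
    ∃ b : B, ∀ z, z ∈ MulAction.orbit B x ∨ z ∈ MulAction.orbit B y → σ z = b • z := by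
  choose t ht using ht
  have key : ∀ ω (b : B), b⁻¹ * t ω ∈ St ω → ∀ z, orb B z = ω → σ z = b • z := by
    intro ω b hb z hz
    subst hz
    nth_rewrite 1 [← pt_co (B := B) z]
    nth_rewrite 3 [← pt_co (B := B) z]
    rw [ht, smul_pt, eq_comm, pt_eq_iff]
    convert hb using 1
    rw [mul_inv_rev, mul_comm (t _), ← mul_assoc, mul_comm _ (co B z), ← mul_assoc]
    simp
  by_cases h : orb B x = orb B y
  · refine ⟨t (orb B y), fun z hz => key (orb B y) _ (by simp) z ?_⟩
    rcases hz with hz | hz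
    · rw [← h]; exact orb_eq_iff.2 hz
    · exact orb_eq_iff.2 hz
  · have h1 := hσ (pt (orb B x) 1) (pt (orb B y) 1) (by
      intro he; apply h; have := congrArg (orb B) he; rwa [orb_pt, orb_pt] at this)
    rw [ht, ht, gam_pt hp, gam_pt hp] at h1
    simp only [mul_one, inv_one] at h1
    obtain ⟨s, hs, s', hs', he⟩ := Subgroup.mem_sup.1 (hstar _ _ _ h h1)
    refine ⟨t (orb B x) * s, fun z hz => ?_⟩
    rcases hz with hz | hz
    · apply key (orb B x) _ _ z (orb_eq_iff.2 hz)
      rw [mul_inv_rev, mul_assoc]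
      simpa using hs
    · apply key (orb B y) _ _ z (orb_eq_iff.2 hz)
      have : (t (orb B x) * s)⁻¹ * t (orb B y) = s' := by
        rw [mul_inv_rev, mul_assoc, ← he]; simp
      rw [this]; exact hs'

/-- rigid on one orbit -/
theorem orbit_rigid (hp : PatOk p) (ω : Om B X) (κ : B ⧸ St ω → Fin 4) (R : B ⧸ St ω → Prop)
    (hκ : ∀ d : B, p ω ω d = κ d) (hrig : RigidCol κ R)
    (σ : Equiv.Perm X) (hσ : ∀ x y, x ≠ y → gam p (σ x) (σ y) = gam p x y)
    (ho : ∀ x, orb B (σ x) = orb B x)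
    (hR : ∀ a b a' b' : B, σ (pt ω a) = pt ω a' → σ (pt ω b) = pt ω b' →
      (R ((a'⁻¹ * b' : B) : B ⧸ St ω) ↔ R ((a⁻¹ * b : B) : B ⧸ St ω))) :
    ∃ t : B, ∀ a, σ (pt ω a) = pt ω (t * a) := by
  have hex : ∀ q : B ⧸ St ω, ∃ b : B, σ (pt ω q.out) = pt ω b := by
    intro q
    refine ⟨co B (σ (pt ω q.out)), ?_⟩
    have := pt_co (B := B) (σ (pt ω q.out))
    rw [ho, orb_pt] at this
    exact this.symm
  choose f hf using hex
  have hmk : ∀ a b : B, pt ω a = pt ω b ↔ (a : B ⧸ St ω) = b := by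
    intro a b
    rw [pt_eq_iff, QuotientGroup.eq]
  have hadm : Adm κ R (fun q => ((f q : B) : B ⧸ St ω)) := by
    refine ⟨?_, ?_, ?_⟩
    · intro q q' h
      have h' : pt ω (f q) = pt ω (f q') := (hmk _ _).2 h
      rw [← hf, ← hf] at h'
      have := (hmk _ _).1 (σ.injective h')
      simpa using this
    · intro q q' h
      have h1 := hσ (pt ω q.out) (pt ω q'.out) (by
        intro he; apply h; simpa using (hmk _ _).1 he)
      rw [hf, hf, gam_pt hp, gam_pt hp, hκ, hκ] at h1
      simpa using h1
    · intro q q'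
      have := hR q.out q'.out _ _ (hf q) (hf q')
      simpa using this
  refine ⟨f 1, fun a => ?_⟩
  have h1 := hrig _ hadm 1 (a : B ⧸ St ω)
  rw [one_mul] at h1
  have h2 : pt ω a = pt ω (a : B ⧸ St ω).out := by rw [hmk]; simp
  rw [h2, hf, hmk, h1]
  simp

end Frame
theorem ifc {α : Type*} {a b : Prop} {ia : Decidable a} {ib : Decidable b} {x y z w : α}
    (h : a ↔ b) (h1 : x = z) (h2 : y = w) :
    @ite α a ia x y = @ite α b ib z w := if_congr h h1 h2

section Core
variable {B : Type*} [CommGroup B] {X : Type*} [MulAction B X]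

structure Core (B : Type*) [CommGroup B] (X : Type*) [MulAction B X] where
  idx : Om B X → ℕ
  idx_inj : Function.Injective idx
  contig : ∀ ω k, k < idx ω → ∃ ω', idx ω' = k
  Φ : Om B X → Om B X → Prop
  Φ_symm : ∀ ω ω', Φ ω ω' → Φ ω' ω
  Φ_ne : ∀ ω ω', Φ ω ω' → ω ≠ ω'
  Φ_zero : ∀ ω ω', Φ ω ω' → idx ω = 0 → idx ω' = 1
  Ψ : Om B X → Om B X → (B →* ℂˣ)
  Z : Om B X → Om B X → ℂˣ
  Ψ_symm : ∀ ω ω' d, Φ ω ω' → Ψ ω' ω d = (Ψ ω ω' d)⁻¹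
  Z_symm : ∀ ω ω', Φ ω ω' → Z ω' ω = Z ω ω'
  Ψ_triv : ∀ ω ω', Φ ω ω' → ∀ s ∈ St ω, Ψ ω ω' s = 1
  Z_ne : ∀ ω ω', Φ ω ω' → Z ω ω' * Z ω ω' ≠ 1
  Z_mem : ∀ ω ω', Φ ω ω' → ∃ g, Ψ ω ω' g = Z ω ω'
  κ : ∀ ω : Om B X, B ⧸ St ω → Fin 4
  κ_symm : ∀ ω q, κ ω q⁻¹ = κ ω q
  rig : ∀ ω, RigidCol (κ ω) (fun _ => True) ∨ ∃ ω', Φ ω ω' ∧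
    RigidCol (κ ω) (fun q => ∃ d : B, (d : B ⧸ St ω) = q ∧ Ψ ω ω' d = Z ω ω')
  hD : ((∀ ω, idx ω = 0 → ∀ q, q ≠ 1 → κ ω q ≠ 3) ∧
        (∀ ω, idx ω = 1 → (∃ q, q ≠ 1 ∧ κ ω q = 3) ∨ ∃ ω', idx ω' = 2)) ∨
      ((∀ ω, idx ω = 0 → ∀ q q', q ≠ 1 → q' ≠ 1 → κ ω q = 3 → κ ω q' = 3 → q = q') ∧
        (∀ ω, idx ω ≠ 0 → ∃ q q', q ≠ q' ∧ q ≠ 1 ∧ q' ≠ 1 ∧ κ ω q = 3 ∧ κ ω q' = 3))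

namespace Core
variable (C : Core B X)
open Classical in
noncomputable def bg (ω ω' : Om B X) : Fin 4 :=
  if 1 ≤ C.idx ω ∧ 1 ≤ C.idx ω' ∧ (C.idx ω = C.idx ω' + 1 ∨ C.idx ω' = C.idx ω + 1) then 3
  else if ¬ C.Φ ω ω' ∧ C.idx ω + C.idx ω' = 1 then 2 else 0

open Classical in
noncomputable def p (ω ω' : Om B X) (d : B) : Fin 4 :=
  if ω = ω' then C.κ ω d
  else if St ω ⊔ St ω' = ⊤ then C.bg ω ω'
  else if d ∈ St ω ⊔ St ω' then 1
  else if C.Φ ω ω' ∧ C.Ψ ω ω' d = C.Z ω ω' then 2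
  else C.bg ω ω'

theorem Φ_comm (ω ω') : C.Φ ω ω' ↔ C.Φ ω' ω := ⟨C.Φ_symm _ _, C.Φ_symm _ _⟩

theorem bg_symm (ω ω') : C.bg ω' ω = C.bg ω ω' := by
  unfold bg
  exact ifc (by tauto) rfl
    (ifc (by rw [C.Φ_comm ω' ω, add_comm (C.idx ω')]) rfl rfl)

theorem bg_ne_one (ω ω') : C.bg ω ω' ≠ 1 := by
  unfold bg
  split_ifs <;> decide

theorem Ψ_triv' (ω ω') (h : C.Φ ω ω') : ∀ s ∈ St ω', C.Ψ ω ω' s = 1 := by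
  intro s hs
  rw [C.Ψ_symm _ _ _ (C.Φ_symm _ _ h), C.Ψ_triv _ _ (C.Φ_symm _ _ h) s hs, inv_one]

theorem Ψ_sup (ω ω') (h : C.Φ ω ω') : ∀ s ∈ St ω ⊔ St ω', C.Ψ ω ω' s = 1 := by
  intro s hs
  obtain ⟨a, ha, b, hb, rfl⟩ := Subgroup.mem_sup.1 hs
  rw [map_mul, C.Ψ_triv _ _ h a ha, C.Ψ_triv' _ _ h b hb, one_mul]

theorem Z_ne_one (ω ω') (h : C.Φ ω ω') : C.Z ω ω' ≠ 1 := by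
  intro h1
  apply C.Z_ne _ _ h
  rw [h1, one_mul]

theorem sup_ne (ω ω') (h : C.Φ ω ω') : St ω ⊔ St ω' ≠ ⊤ := by
  intro ht
  obtain ⟨g, hg⟩ := C.Z_mem _ _ h
  apply C.Z_ne_one _ _ h
  rw [← hg]
  exact C.Ψ_sup _ _ h g (ht ▸ Subgroup.mem_top g)

theorem p_self (ω : Om B X) (d : B) : C.p ω ω d = C.κ ω d := by
  simp [p]

theorem patOk : PatOk C.p := by
  refine ⟨?_, ?_⟩
  · intro ω ω' d
    by_cases h : ω = ω'
    · subst h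
      rw [p_self, p_self, QuotientGroup.mk_inv, C.κ_symm]
    · have h' : ω' ≠ ω := fun e => h e.symm
      unfold p
      rw [if_neg h, if_neg h', sup_comm, inv_mem_iff, C.bg_symm]
      have : (C.Φ ω' ω ∧ C.Ψ ω' ω d⁻¹ = C.Z ω' ω) ↔ (C.Φ ω ω' ∧ C.Ψ ω ω' d = C.Z ω ω') := by
        rw [C.Φ_comm ω' ω]
        refine and_congr_right fun hΦ => ?_
        rw [C.Ψ_symm _ _ _ hΦ, C.Z_symm _ _ hΦ, map_inv, inv_inv]
      exact ifc Iff.rfl rfl (ifc Iff.rfl rfl (ifc this rfl rfl))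
  · intro ω ω' s d hs
    by_cases h : ω = ω'
    · subst h
      rw [p_self, p_self, QuotientGroup.mk_mul, (QuotientGroup.eq_one_iff s).2 hs, one_mul]
    · unfold p
      rw [if_neg h, if_neg h]
      have h1 : s * d ∈ St ω ⊔ St ω' ↔ d ∈ St ω ⊔ St ω' :=
        Subgroup.mul_mem_cancel_left _ (Subgroup.mem_sup_left hs)
      have : (C.Φ ω ω' ∧ C.Ψ ω ω' (s * d) = C.Z ω ω') ↔ (C.Φ ω ω' ∧ C.Ψ ω ω' d = C.Z ω ω') := by
        refine and_congr_right fun hΦ => ?_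
        rw [map_mul, C.Ψ_triv _ _ hΦ s hs, one_mul]
      exact ifc Iff.rfl rfl (ifc h1 rfl (ifc this rfl rfl))

theorem p_one_iff (ω ω') (hne : ω ≠ ω') (d : B) (ht : St ω ⊔ St ω' ≠ ⊤) :
    C.p ω ω' d = 1 ↔ d ∈ St ω ⊔ St ω' := by
  unfold p
  rw [if_neg hne, if_neg ht]
  have := C.bg_ne_one ω ω'
  split_ifs with h1 h2 <;> simp [h1, this]

theorem hstar (ω ω' : Om B X) (d : B) (hne : ω ≠ ω') (h : C.p ω ω' d = C.p ω ω' 1) :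
    d ∈ St ω ⊔ St ω' := by
  by_cases ht : St ω ⊔ St ω' = ⊤
  · rw [ht]; exact Subgroup.mem_top d
  · rw [← C.p_one_iff ω ω' hne d ht, h, C.p_one_iff ω ω' hne 1 ht]
    exact one_mem _

theorem p_three (ω ω' : Om B X) (d : B) (hne : ω ≠ ω') (h : C.p ω ω' d = 3) :
    1 ≤ C.idx ω ∧ 1 ≤ C.idx ω' ∧ (C.idx ω = C.idx ω' + 1 ∨ C.idx ω' = C.idx ω + 1) := by
  by_contra hn
  have : C.bg ω ω' ≠ 3 := by
    unfold bg
    rw [if_neg hn]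
    split_ifs <;> decide
  unfold p at h
  rw [if_neg hne] at h
  split_ifs at h <;> first | exact this h | exact absurd h (by decide)

theorem p_two (ω ω' : Om B X) (d : B) (hne : ω ≠ ω') (h0 : C.idx ω' = 0) (h : C.p ω ω' d = 2) :
    C.idx ω = 1 := by
  by_contra hn
  have hΦ : ¬ C.Φ ω ω' := fun h => hn (C.Φ_zero _ _ (C.Φ_symm _ _ h) h0)
  have : C.bg ω ω' ≠ 2 := by
    unfold bg
    rw [if_neg (by omega), if_neg (by omega)]
    decide
  unfold p at h
  rw [if_neg hne] at h
  split_ifs at h <;> first | exact this h | exact absurd h (by decide) | tauto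

theorem bg_occurs (ω ω' : Om B X) (hne : ω ≠ ω') : ∃ d, C.p ω ω' d = C.bg ω ω' := by
  by_cases ht : St ω ⊔ St ω' = ⊤
  · exact ⟨1, by simp [p, hne, ht]⟩
  by_cases hΦ : C.Φ ω ω'
  · obtain ⟨g, hg⟩ := C.Z_mem _ _ hΦ
    refine ⟨g⁻¹, ?_⟩
    unfold p
    rw [if_neg hne, if_neg ht, if_neg, if_neg]
    · rintro ⟨-, h⟩
      rw [map_inv, hg] at h
      apply C.Z_ne _ _ hΦ
      nth_rewrite 1 [← h]
      simp
    · intro h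
      have := C.Ψ_sup _ _ hΦ _ h
      rw [map_inv, hg, inv_eq_one] at this
      exact C.Z_ne_one _ _ hΦ this
  · obtain ⟨d, hd⟩ : ∃ d, d ∉ St ω ⊔ St ω' := by
      by_contra hc
      push Not at hc
      exact ht (eq_top_iff.2 fun x _ => hc x)
    exact ⟨d, by simp [p, hne, ht, hΦ, hd]⟩

theorem exists_three (ω ω' : Om B X) (h1 : 1 ≤ C.idx ω) (h1' : 1 ≤ C.idx ω')
    (h : C.idx ω = C.idx ω' + 1 ∨ C.idx ω' = C.idx ω + 1) : ∃ d, C.p ω ω' d = 3 := by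
  have hne : ω ≠ ω' := by rintro rfl; omega
  obtain ⟨d, hd⟩ := C.bg_occurs ω ω' hne
  refine ⟨d, ?_⟩
  rw [hd, bg, if_pos ⟨h1, h1', h⟩]

theorem p_two_iff (ω ω' : Om B X) (hΦ : C.Φ ω ω') (d : B) :
    C.p ω ω' d = 2 ↔ C.Ψ ω ω' d = C.Z ω ω' := by
  have hb : C.bg ω ω' ≠ 2 := by
    unfold bg
    split_ifs with h1 h2
    · decide
    · exact absurd hΦ h2.1
    · decide
  unfold p
  rw [if_neg (C.Φ_ne _ _ hΦ), if_neg (C.sup_ne _ _ hΦ)]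
  split_ifs with h1 h2
  · have := C.Ψ_sup _ _ hΦ _ h1
    rw [this]
    have h3 := C.Z_ne_one _ _ hΦ
    constructor
    · intro h; exact absurd h (by decide)
    · intro h; exact absurd h.symm h3
  · simp [h2.2]
  · constructor
    · intro h; exact absurd h hb
    · intro h; exact absurd ⟨hΦ, h⟩ h2

theorem exists_two (ω ω' : Om B X) (h1 : C.idx ω = 1) (h0 : C.idx ω' = 0) :
    ∃ d, C.p ω ω' d = 2 := by
  have hne : ω ≠ ω' := by rintro rfl; omega
  by_cases hΦ : C.Φ ω ω'
  · obtain ⟨g, hg⟩ := C.Z_mem _ _ hΦ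
    exact ⟨g, (C.p_two_iff _ _ hΦ _).2 hg⟩
  · obtain ⟨d, hd⟩ := C.bg_occurs ω ω' hne
    refine ⟨d, ?_⟩
    rw [hd, bg, if_neg (by omega), if_pos ⟨hΦ, by omega⟩]

def IsAut (σ : Equiv.Perm X) : Prop := ∀ x y, x ≠ y → gam C.p (σ x) (σ y) = gam C.p x y

theorem IsAut.symm {σ : Equiv.Perm X} (h : C.IsAut σ) : C.IsAut σ.symm := by
  intro x y hxy
  have := h (σ.symm x) (σ.symm y) (by simpa using hxy)
  simpa using this.symm

theorem gam_pt' (ω ω' : Om B X) (a b : B) :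
    gam C.p (pt ω a) (pt ω' b) = C.p ω ω' (a⁻¹ * b) := gam_pt C.patOk ω ω' a b

theorem gam_orb (x y : X) : gam C.p x y = C.p (orb B x) (orb B y) ((co B x)⁻¹ * co B y) := rfl

/-- neighbour of `x` in orbit `ω'` with given colour -/
theorem exists_nb (x : X) (ω' : Om B X) (c : Fin 4) (h : ∃ d, C.p (orb B x) ω' d = c) :
    ∃ y, orb B y = ω' ∧ gam C.p x y = c := by
  obtain ⟨d, hd⟩ := h
  refine ⟨pt ω' (co B x * d), orb_pt _ _, ?_⟩
  nth_rewrite 1 [← pt_co (B := B) x]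
  rw [gam_pt', inv_mul_cancel_left, hd]

theorem inner_nb (x : X) (q : B ⧸ St (orb B x)) (hq : q ≠ 1) :
    ∃ y, y ≠ x ∧ gam C.p x y = C.κ _ q ∧ ((co B x : B) : B ⧸ St (orb B x)) * q = (co B x * q.out : B) ∧
      y = pt (orb B x) (co B x * q.out) := by
  refine ⟨pt (orb B x) (co B x * q.out), ?_, ?_, by simp, rfl⟩
  · intro h
    replace h := h.trans (pt_co (B := B) x).symm
    rw [eq_comm, pt_eq_iff, inv_mul_cancel_left, ← QuotientGroup.eq_one_iff] at h
    simp at h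
    exact hq h
  · nth_rewrite 1 [← pt_co (B := B) x]
    rw [gam_pt', inv_mul_cancel_left, p_self]
    simp

theorem base (σ : Equiv.Perm X) (hσ : C.IsAut σ) (x : X) :
    C.idx (orb B (σ x)) = 0 ↔ C.idx (orb B x) = 0 := by
  have inner : ∀ x y : X, C.idx (orb B x) = 0 → y ≠ x → gam C.p x y = 3 →
      ∃ q : B ⧸ St (orb B x), q ≠ 1 ∧ C.κ _ q = 3 ∧ ∃ d : B, (d : B ⧸ St (orb B x)) = q ∧ 
        y = pt (orb B x) (co B x * d) := by
    intro x y h0 hyx h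
    have hxy : orb B x = orb B y := by
      by_contra hne
      have := C.p_three _ _ _ hne h
      omega
    have hy : y = pt (orb B x) (co B y) := by rw [hxy, pt_co]
    refine ⟨(((co B x)⁻¹ * co B y : B) : B ⧸ St (orb B x)), ?_, ?_, _, rfl, ?_⟩
    · intro he
      apply hyx
      rw [hy]
      refine Eq.trans ?_ (pt_co (B := B) x)
      rw [eq_comm, pt_eq_iff, ← QuotientGroup.eq_one_iff, he]
    · rw [← p_self, ← h, gam_orb, ← hxy]
    · rw [mul_inv_cancel_left]
      exact hy
  rcases C.hD with ⟨ha, hb⟩ | ⟨ha, hb⟩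
  · have key : ∀ x : X, C.idx (orb B x) = 0 ↔ ∀ y, y ≠ x → gam C.p x y ≠ 3 := by
      intro x
      constructor
      · intro h0 y hyx h
        obtain ⟨q, hq, h3, -⟩ := inner x y h0 hyx h
        exact ha _ h0 q hq h3
      · intro h
        by_contra h0
        have hpath : ∀ ω', 1 ≤ C.idx ω' → (C.idx (orb B x) = C.idx ω' + 1 ∨
            C.idx ω' = C.idx (orb B x) + 1) → False := by
          intro ω' h1 h2
          obtain ⟨y, hy, hc⟩ := C.exists_nb x ω' 3 (C.exists_three _ _ (by omega) h1 h2)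
          refine h y ?_ hc
          rintro rfl
          rw [hy] at h2
          omega
        by_cases h1 : C.idx (orb B x) = 1
        · rcases hb _ h1 with ⟨q, hq, h3⟩ | ⟨ω', h2⟩
          · obtain ⟨y, hy, hc, -⟩ := C.inner_nb x q hq
            exact h y hy (hc.trans h3)
          · exact hpath ω' (by omega) (by omega)
        · obtain ⟨ω', h2⟩ := C.contig (orb B x) (C.idx (orb B x) - 1) (by omega)
          exact hpath ω' (by omega) (by omega)
    rw [key, key]
    constructor
    · intro h y hy
      rw [← hσ _ _ hy.symm]
      exact h _ (by simpa using hy)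
    · intro h y hy
      have hy' : σ.symm y ≠ x := by
        intro e; apply hy; rw [← e]; simp
      have := hσ _ _ hy'.symm
      simp only [Equiv.apply_symm_apply] at this
      rw [this]
      exact h _ hy'
  · have key : ∀ x : X, C.idx (orb B x) = 0 ↔ ∀ y y', y ≠ x → y' ≠ x → gam C.p x y = 3 →
        gam C.p x y' = 3 → y = y' := by
      intro x
      constructor
      · intro h0 y y' hyx hyx' h h'
        obtain ⟨q, hq, h3, d, hd, e⟩ := inner x y h0 hyx h
        obtain ⟨q', hq', h3', d', hd', e'⟩ := inner x y' h0 hyx' h'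
        have := ha _ h0 q q' hq hq' h3 h3'
        rw [e, e', pt_eq_iff, mul_inv_rev, mul_assoc, inv_mul_cancel_left, ← QuotientGroup.eq, hd,
          hd', this]
      · intro h
        by_contra h0
        obtain ⟨q, q', hqq, hq, hq', h3, h3'⟩ := hb _ h0
        obtain ⟨y, hy, hc, hm, e⟩ := C.inner_nb x q hq
        obtain ⟨y', hy', hc', hm', e'⟩ := C.inner_nb x q' hq'
        have := h y y' hy hy' (hc.trans h3) (hc'.trans h3')
        rw [e, e', pt_eq_iff, ← QuotientGroup.eq, ← hm, ← hm'] at this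
        exact hqq (mul_left_cancel this)
    rw [key, key]
    constructor
    · intro h y y' hy hy' h3 h3'
      rw [← hσ _ _ hy.symm] at h3
      rw [← hσ _ _ hy'.symm] at h3'
      exact σ.injective (h _ _ (by simpa using hy) (by simpa using hy') h3 h3')
    · intro h y y' hy hy' h3 h3'
      have e : σ.symm y ≠ x := by
        intro e; apply hy; rw [← e]; simp
      have e' : σ.symm y' ≠ x := by
        intro e; apply hy'; rw [← e]; simp
      have := hσ _ _ e.symm
      simp only [Equiv.apply_symm_apply] at this
      rw [this] at h3
      have := hσ _ _ e'.symm
      simp only [Equiv.apply_symm_apply] at this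
      rw [this] at h3'
      exact σ.symm.injective (h _ _ e e' h3 h3')

theorem pres (k : ℕ) : ∀ σ : Equiv.Perm X, C.IsAut σ → ∀ x, C.idx (orb B x) = k →
    C.idx (orb B (σ x)) = k := by
  induction k using Nat.strong_induction_on with
  | _ k ih =>
    intro σ hσ x hx
    rcases k with _ | k
    · exact (C.base σ hσ x).2 hx
    have hge : ¬ C.idx (orb B (σ x)) < k + 1 := by
      intro hlt
      have := ih _ hlt σ.symm hσ.symm (σ x) rfl
      rw [Equiv.symm_apply_apply] at this
      omega
    obtain ⟨ω', hω'⟩ := C.contig (orb B x) k (by omega)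
    rcases k with _ | k
    · obtain ⟨y, hy, hc⟩ := C.exists_nb x ω' 2 (C.exists_two _ _ hx hω')
      have hxy : x ≠ y := by rintro rfl; rw [hy] at hx; omega
      rw [← hσ _ _ hxy, gam_orb] at hc
      have hk := ih 0 (by omega) σ hσ y (by rw [hy, hω'])
      exact C.p_two _ _ _ (by intro e; rw [e] at hge; omega) hk hc
    · obtain ⟨y, hy, hc⟩ := C.exists_nb x ω' 3 (C.exists_three _ _ (by omega) (by omega) (by omega))
      have hxy : x ≠ y := by rintro rfl; rw [hy] at hx; omega
      rw [← hσ _ _ hxy, gam_orb] at hc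
      have hk := ih (k+1) (by omega) σ hσ y (by rw [hy, hω'])
      have := C.p_three _ _ _ (by intro e; rw [e] at hge; omega) hc
      omega

theorem pres_orb (σ : Equiv.Perm X) (hσ : C.IsAut σ) (x : X) : orb B (σ x) = orb B x :=
  C.idx_inj (C.pres _ σ hσ x rfl)

theorem rel_iff (ω ω' : Om B X) (hΦ : C.Φ ω ω') (a b : B) :
    C.Ψ ω ω' (a⁻¹ * b) = C.Z ω ω' ↔
      ∃ y, orb B y = ω' ∧ gam C.p (pt ω b) y = 1 ∧ gam C.p (pt ω a) y = 2 := by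
  have hne := C.Φ_ne _ _ hΦ
  have ht := C.sup_ne _ _ hΦ
  constructor
  · intro h
    refine ⟨pt ω' b, orb_pt _ _, ?_, ?_⟩
    · rw [gam_pt', C.p_one_iff _ _ hne _ ht]; simp
    · rw [gam_pt', C.p_two_iff _ _ hΦ, h]
  · rintro ⟨y, hy, h1, h2⟩
    have e : y = pt ω' (co B y) := by rw [← hy, pt_co]
    rw [e, gam_pt', C.p_one_iff _ _ hne _ ht] at h1
    rw [e, gam_pt', C.p_two_iff _ _ hΦ] at h2
    have h3 := C.Ψ_sup _ _ hΦ _ h1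
    rw [← h2]
    have : a⁻¹ * co B y = (a⁻¹ * b) * (b⁻¹ * co B y) := by group
    rw [this, map_mul _ (a⁻¹ * b), h3, mul_one]

theorem translate (σ : Equiv.Perm X) (hσ : C.IsAut σ) (ω : Om B X) :
    ∃ t : B, ∀ a, σ (pt ω a) = pt ω (t * a) := by
  have ho := C.pres_orb σ hσ
  rcases C.rig ω with h | ⟨ω', hΦ, h⟩
  · exact orbit_rigid C.patOk ω (C.κ ω) _ (C.p_self ω) h σ hσ ho (fun _ _ _ _ _ _ => Iff.rfl)
  · refine orbit_rigid C.patOk ω (C.κ ω) _ (C.p_self ω) h σ hσ ho ?_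
    have hred : ∀ d : B, (∃ d' : B, (d' : B ⧸ St ω) = (d : B ⧸ St ω) ∧
        C.Ψ ω ω' d' = C.Z ω ω') ↔ C.Ψ ω ω' d = C.Z ω ω' := by
      intro d
      constructor
      · rintro ⟨d', h1, h2⟩
        rw [QuotientGroup.eq] at h1
        have h3 := C.Ψ_triv _ _ hΦ _ h1
        rw [map_mul, map_inv, inv_mul_eq_one] at h3
        rw [← h3, h2]
      · intro h; exact ⟨d, rfl, h⟩
    intro a b a' b' ha hb
    rw [hred, hred, C.rel_iff _ _ hΦ, C.rel_iff _ _ hΦ, ← ha, ← hb]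
    have hne : ∀ (c : B) (y : X), orb B y = ω' → pt ω c ≠ y := by
      rintro c y hy rfl
      rw [orb_pt] at hy
      exact C.Φ_ne _ _ hΦ hy
    constructor
    · rintro ⟨y, hy, h1, h2⟩
      have hy' : orb B (σ.symm y) = ω' := by rw [← hy, C.pres_orb _ hσ.symm]
      refine ⟨σ.symm y, hy', ?_, ?_⟩
      · rw [← hσ _ _ (hne _ _ hy')]; simpa using h1
      · rw [← hσ _ _ (hne _ _ hy')]; simpa using h2
    · rintro ⟨y, hy, h1, h2⟩
      refine ⟨σ y, by rw [ho, hy], ?_, ?_⟩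
      · rw [hσ _ _ (hne _ _ hy), h1]
      · rw [hσ _ _ (hne _ _ hy), h2]

theorem main (C : Core B X) (closed : ∀ σ : Equiv.Perm X, (∀ x y, ∃ b : B, ∀ z,
      z ∈ MulAction.orbit B x ∨ z ∈ MulAction.orbit B y → σ z = b • z) → ∃ b : B, ∀ z, σ z = b • z) :
    ∃ γ : Sym2 X → Fin 4, ∀ σ : Equiv.Perm X, (∃ b : B, ∀ z, σ z = b • z) ↔
      ∀ x y, x ≠ y → γ s(σ x, σ y) = γ s(x, y) := by
  refine ⟨Sym2.lift ⟨gam C.p, gam_symm C.patOk⟩, fun σ => ?_⟩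
  simp only [Sym2.lift_mk]
  constructor
  · rintro ⟨b, hb⟩ x y -
    rw [hb, hb, gam_smul C.patOk]
  · intro h
    exact closed σ (glue C.patOk C.hstar σ h (C.translate σ h))

end Core
end Core
section Choices

theorem exists_idx {α : Type*} [Finite α] (o1 o2 : α) : ∃ idx : α → ℕ, Function.Injective idx ∧
    (∀ ω k, k < idx ω → ∃ ω', idx ω' = k) ∧ idx o1 = 0 ∧ (o2 ≠ o1 → idx o2 = 1) := by
  obtain ⟨m, ⟨e⟩⟩ := Finite.exists_equiv_fin α
  have h0 : 0 < m := (e o1).pos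
  have fin : ∀ e' : α ≃ Fin m, Function.Injective (fun a => ((e' a : Fin m) : ℕ)) ∧
      (∀ ω k, k < ((e' ω : Fin m) : ℕ) → ∃ ω', ((e' ω' : Fin m) : ℕ) = k) := by
    intro e'
    refine ⟨fun a b h => e'.injective (Fin.ext h), fun ω k hk => ?_⟩
    refine ⟨e'.symm ⟨k, hk.trans (e' ω).isLt⟩, by simp⟩
  let e1 := e.trans (Equiv.swap (e o1) ⟨0, h0⟩)
  have he1 : e1 o1 = ⟨0, h0⟩ := by simp [e1]
  by_cases h : o2 = o1
  · exact ⟨_, (fin e1).1, (fin e1).2, by simp [he1], fun h' => absurd h h'⟩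
  · have hne : e1 o2 ≠ e1 o1 := fun h' => h (e1.injective h')
    have h1 : 1 < m := by
      have : (e1 o2 : ℕ) ≠ 0 := by
        intro h'; apply hne; rw [he1]; exact Fin.ext h'
      have := (e1 o2).isLt
      omega
    let e2 := e1.trans (Equiv.swap (e1 o2) ⟨1, h1⟩)
    refine ⟨_, (fin e2).1, (fin e2).2, ?_, fun _ => ?_⟩
    · have : e2 o1 = e1 o1 := by
        simp only [e2, Equiv.trans_apply]
        apply Equiv.swap_apply_of_ne_of_ne hne.symm
        rw [he1]; simp
      simp [this, he1]
    · simp [e2]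

variable {B : Type*} [CommGroup B] {X : Type*} [MulAction B X]

def PP (ω ω' : Om B X) : Prop := ω ≠ ω' ∧ ∃ a, a * a ∉ St ω ⊔ St ω'

theorem PP.symm {ω ω' : Om B X} (h : PP ω ω') : PP ω' ω := by
  refine ⟨h.1.symm, ?_⟩
  rw [sup_comm]; exact h.2

theorem exists_chars [Finite B] (idx : Om B X → ℕ) (hi : Function.Injective idx) :
    ∃ (Ψ : Om B X → Om B X → (B →* ℂˣ)) (Z : Om B X → Om B X → ℂˣ), ∀ ω ω', PP ω ω' →
      (∀ d, Ψ ω' ω d = (Ψ ω ω' d)⁻¹) ∧ Z ω' ω = Z ω ω' ∧ (∀ s ∈ St ω, Ψ ω ω' s = 1) ∧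
      Z ω ω' * Z ω ω' ≠ 1 ∧ (∃ g, Ψ ω ω' g = Z ω ω') ∧ ∀ x, ∃ n : ℤ, Ψ ω ω' x = Z ω ω' ^ n := by
  have hch : ∀ ω ω' : Om B X, ∃ (φ : B →* ℂˣ) (g : B), PP ω ω' → (∀ s ∈ St ω ⊔ St ω', φ s = 1) ∧
      φ g * φ g ≠ 1 ∧ ∀ x, ∃ n : ℤ, φ x = φ g ^ n := by
    intro ω ω'
    by_cases h : PP ω ω'
    · obtain ⟨-, a, ha⟩ := id h
      obtain ⟨φ, g, h⟩ := exists_char _ a ha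
      exact ⟨φ, g, fun _ => h⟩
    · exact ⟨1, 1, fun h' => absurd h' h⟩
  choose φ g hφ using hch
  refine ⟨fun ω ω' => if idx ω < idx ω' then φ ω ω' else (φ ω' ω)⁻¹,
    fun ω ω' => if idx ω < idx ω' then φ ω ω' (g ω ω') else φ ω' ω (g ω' ω), ?_⟩
  intro ω ω' hP
  have hne : idx ω ≠ idx ω' := fun h => hP.1 (hi h)
  rcases lt_or_gt_of_ne hne with h | h
  · simp only [if_pos h, if_neg (not_lt.2 h.le)]
    obtain ⟨h1, h2, h3⟩ := hφ _ _ hP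
    refine ⟨fun d => by simp, trivial, fun s hs => h1 s (Subgroup.mem_sup_left hs), h2, ⟨_, rfl⟩, h3⟩
  · simp only [if_pos h, if_neg (not_lt.2 h.le)]
    obtain ⟨h1, h2, h3⟩ := hφ _ _ hP.symm
    refine ⟨fun d => by simp, trivial, fun s hs => ?_, h2, ⟨(g ω' ω)⁻¹, by simp⟩, ?_⟩
    · simp [h1 s (Subgroup.mem_sup_right hs)]
    · intro x
      obtain ⟨n, hn⟩ := h3 x
      exact ⟨-n, by simp [hn]⟩

theorem exists_kN [Finite B] (N : Subgroup B) (φ : B →* ℂˣ) (z : ℂˣ) (hN : ∀ s ∈ N, φ s = 1)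
    (hz : z * z ≠ 1) (hg : ∃ g, φ g = z) (hr : ∀ x, ∃ n : ℤ, φ x = z ^ n) :
    ∃ κ : B ⧸ N → Fin 4, (∀ x, κ x⁻¹ = κ x) ∧ (∀ x, κ x ≠ 3) ∧
      RigidCol κ (fun q => ∃ d : B, (d : B ⧸ N) = q ∧ φ d = z) := by
  obtain ⟨g, rfl⟩ := hg
  let φ' : B ⧸ N →* ℂˣ := QuotientGroup.lift N φ hN
  have hφ' : ∀ d : B, φ' d = φ d := fun d => QuotientGroup.lift_mk' N hN d
  obtain ⟨κ, h1, h2, h3⟩ := lemmaN φ' (g : B ⧸ N) (by rwa [hφ']) (by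
    intro x
    obtain ⟨d, rfl⟩ := QuotientGroup.mk_surjective x
    obtain ⟨n, hn⟩ := hr d
    exact ⟨n, by rw [hφ', hφ', hn]⟩)
  refine ⟨κ, h1, h2, ?_⟩
  convert h3 using 2 with q
  obtain ⟨d, rfl⟩ := QuotientGroup.mk_surjective q
  rw [hφ', hφ']
  constructor
  · rintro ⟨d', h, h'⟩
    rw [← h', ← hφ', ← hφ', h]
  · intro h
    exact ⟨d, rfl, h⟩

def Elm (ω : Om B X) : Prop := ∀ a : B, a * a ∈ St ω

theorem Elm.sq {ω : Om B X} (h : Elm ω) (q : B ⧸ St ω) : q * q = 1 := by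
  obtain ⟨d, rfl⟩ := QuotientGroup.mk_surjective q
  rw [← QuotientGroup.mk_mul, QuotientGroup.eq_one_iff]
  exact h d

theorem ntriv {ω : Om B X} (h : St ω ≠ ⊤) : ∃ q : B ⧸ St ω, q ≠ 1 := by
  by_contra hc
  push Not at hc
  apply h
  rw [eq_top_iff]
  intro x _
  exact (QuotientGroup.eq_one_iff x).1 (hc x)

theorem PP.not_elm {ω ω' : Om B X} (h : PP ω ω') : ¬ Elm ω := by
  intro he
  obtain ⟨-, a, ha⟩ := h
  exact ha (Subgroup.mem_sup_left (he a))

def TI (ω : Om B X) : Prop := ∃ κ : B ⧸ St ω → Fin 4, GoodE κ ∧ ∀ x, x ≠ 1 → κ x ≠ 3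
def TII (ω : Om B X) : Prop :=
  (∃ κ : B ⧸ St ω → Fin 4, GoodE κ ∧ ∀ x y, x ≠ 1 → y ≠ 1 → κ x = 3 → κ y = 3 → x = y) ∧
  (∃ κ : B ⧸ St ω → Fin 4, GoodE κ ∧ ∃ x y, x ≠ y ∧ x ≠ 1 ∧ y ≠ 1 ∧ κ x = 3 ∧ κ y = 3)

theorem core_a [Finite B] [Finite X] (o1 o2 : Om B X) (h12 : (∃ ω, ω ≠ o1) → o2 ≠ o1)
    (hnb : ∀ ω, ¬ Elm ω → ∃ ω', PP ω ω' ∧ ¬ (ω = o1 ∧ ω' ≠ o2) ∧ ¬ (ω' = o1 ∧ ω ≠ o2))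
    (h1 : ¬ Elm o1 ∨ TI o1) (h2 : o2 ≠ o1 → St o2 ≠ ⊤) : Nonempty (Core B X) := by
  obtain ⟨idx, hinj, hcont, hi1, hi2⟩ := exists_idx o1 o2
  obtain ⟨Ψ, Z, hΨ⟩ := exists_chars (B := B) (X := X) idx hinj
  let Φ : Om B X → Om B X → Prop := fun ω ω' =>
    PP ω ω' ∧ ¬ (ω = o1 ∧ ω' ≠ o2) ∧ ¬ (ω' = o1 ∧ ω ≠ o2)
  have hz : ∀ ω, idx ω = 0 → ω = o1 := fun ω h => hinj (h.trans hi1.symm)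
  have ho : ∀ ω, idx ω = 1 → ω = o2 ∧ ω ≠ o1 := by
    intro ω h
    have : ω ≠ o1 := by rintro rfl; omega
    exact ⟨hinj (h.trans (hi2 (h12 ⟨ω, this⟩)).symm), this⟩
  have hk : ∀ ω : Om B X, ∃ κ : B ⧸ St ω → Fin 4, (∀ q, κ q⁻¹ = κ q) ∧
      (RigidCol κ (fun _ => True) ∨ ∃ ω', Φ ω ω' ∧
        RigidCol κ (fun q => ∃ d : B, (d : B ⧸ St ω) = q ∧ Ψ ω ω' d = Z ω ω')) ∧
      (idx ω = 0 → ∀ q, q ≠ 1 → κ q ≠ 3) ∧ (idx ω = 1 → ∃ q, q ≠ 1 ∧ κ q = 3) := by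
    intro ω
    by_cases he : Elm ω
    · by_cases h0 : idx ω = 0
      · obtain rfl := hz ω h0
        obtain ⟨κ, hκ, h3⟩ := h1.resolve_left (not_not.2 he)
        exact ⟨κ, hκ.1, Or.inl hκ.2, fun _ => h3, fun h => by omega⟩
      · obtain ⟨⟨κ, hκ, h3⟩, -⟩ := lemmaE (G := B ⧸ St ω) he.sq
        refine ⟨κ, hκ.1, Or.inl hκ.2, fun h => absurd h h0, fun h => h3 ?_⟩
        obtain ⟨rfl, hne⟩ := ho ω h
        exact ntriv (h2 hne)
    · obtain ⟨ω', hω'⟩ := hnb ω he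
      obtain ⟨-, -, a1, a2, a3, a4⟩ := hΨ _ _ hω'.1
      obtain ⟨κ, k1, k2, k3⟩ := exists_kN (St ω) _ _ a1 a2 a3 a4
      by_cases h0 : idx ω = 1
      · obtain ⟨rfl, hne⟩ := ho ω h0
        obtain ⟨q0, hq0⟩ := ntriv (h2 hne)
        refine ⟨fun q => Equiv.swap (κ q0) 3 (κ q), fun q => congrArg _ (k1 q), Or.inr ⟨ω', hω', k3.perm _⟩,
          fun h => by omega, fun _ => ⟨q0, hq0, by simp⟩⟩
      · exact ⟨κ, k1, Or.inr ⟨ω', hω', k3⟩, fun _ q _ => k2 q, fun h => absurd h h0⟩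
  choose κ k1 k2 k3 k4 using hk
  exact ⟨{
    idx := idx
    idx_inj := hinj
    contig := hcont
    Φ := Φ
    Φ_symm := fun ω ω' h => ⟨h.1.symm, h.2.2, h.2.1⟩
    Φ_ne := fun ω ω' h => h.1.1
    Φ_zero := by
      intro ω ω' h h0
      obtain rfl := hz ω h0
      have e : ω' = o2 := by
        by_contra hc
        exact h.2.1 ⟨rfl, hc⟩
      subst e
      exact hi2 h.1.1.symm
    Ψ := Ψ
    Z := Z
    Ψ_symm := fun ω ω' d h => (hΨ _ _ h.1).1 d
    Z_symm := fun ω ω' h => (hΨ _ _ h.1).2.1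
    Ψ_triv := fun ω ω' h => (hΨ _ _ h.1).2.2.1
    Z_ne := fun ω ω' h => (hΨ _ _ h.1).2.2.2.1
    Z_mem := fun ω ω' h => (hΨ _ _ h.1).2.2.2.2.1
    κ := κ
    κ_symm := k1
    rig := k2
    hD := Or.inl ⟨k3, fun ω h => Or.inl (k4 ω h)⟩ }⟩

theorem core_b [Finite B] [Finite X] (o1 : Om B X) (h : ∀ ω : Om B X, TII ω) :
    Nonempty (Core B X) := by
  obtain ⟨idx, hinj, hcont, hi1, hi2⟩ := exists_idx o1 o1
  have hk : ∀ ω : Om B X, ∃ κ : B ⧸ St ω → Fin 4, GoodE κ ∧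
      (idx ω = 0 → ∀ q q', q ≠ 1 → q' ≠ 1 → κ q = 3 → κ q' = 3 → q = q') ∧
      (idx ω ≠ 0 → ∃ q q', q ≠ q' ∧ q ≠ 1 ∧ q' ≠ 1 ∧ κ q = 3 ∧ κ q' = 3) := by
    intro ω
    obtain ⟨⟨κ, hκ, h1⟩, ⟨κ', hκ', h2⟩⟩ := h ω
    by_cases h0 : idx ω = 0
    · exact ⟨κ, hκ, fun _ => h1, fun h => absurd h0 h⟩
    · exact ⟨κ', hκ', fun h => absurd h h0, fun _ => h2⟩
  choose κ k1 k2 k3 using hk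
  exact ⟨{
    idx := idx
    idx_inj := hinj
    contig := hcont
    Φ := fun _ _ => False
    Φ_symm := fun ω ω' h => h
    Φ_ne := fun ω ω' h => h.elim
    Φ_zero := fun ω ω' h => h.elim
    Ψ := fun _ _ => 1
    Z := fun _ _ => 1
    Ψ_symm := fun ω ω' d h => h.elim
    Z_symm := fun ω ω' h => h.elim
    Ψ_triv := fun ω ω' h => h.elim
    Z_ne := fun ω ω' h => h.elim
    Z_mem := fun ω ω' h => h.elim
    κ := κ
    κ_symm := fun ω => (k1 ω).1
    rig := fun ω => Or.inl (k1 ω).2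
    hD := Or.inr ⟨k2, k3⟩ }⟩

theorem exists_core [Finite B] [Finite X] (hP : ∀ ω : Om B X, ¬ Elm ω → ∃ ω', PP ω ω')
    (hnt : ∃ ω : Om B X, St ω ≠ ⊤) : Nonempty (Core B X) := by
  by_cases hE : ∃ ω ω' : Om B X, PP ω ω'
  · have hst : ∀ ω : Om B X, ¬ Elm ω → St ω ≠ ⊤ := by
      intro ω h ht
      apply h
      intro a
      rw [ht]; exact Subgroup.mem_top _
    by_cases hl : ∃ o1 o2 : Om B X, PP o1 o2 ∧ ∀ ω', PP o1 ω' → ω' = o2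
    · obtain ⟨o1, o2, h, hu⟩ := hl
      refine core_a o1 o2 (fun _ => h.1.symm) ?_ (Or.inl h.not_elm) (fun _ => hst _ h.symm.not_elm)
      intro ω hω
      obtain ⟨ω', hω'⟩ := hP ω hω
      by_cases e1 : ω = o1
      · subst e1
        refine ⟨o2, h, by tauto, ?_⟩
        rintro ⟨h', -⟩
        exact h.1 h'.symm
      · by_cases e2 : ω = o2
        · subst e2
          exact ⟨o1, h.symm, by tauto, by tauto⟩
        · refine ⟨ω', hω', by tauto, ?_⟩
          rintro ⟨rfl, -⟩
          exact e2 (hu _ hω'.symm)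
    · obtain ⟨o1, o2, h⟩ := hE
      refine core_a o1 o2 (fun _ => h.1.symm) ?_ (Or.inl h.not_elm) (fun _ => hst _ h.symm.not_elm)
      intro ω hω
      by_cases e1 : ω = o1
      · subst e1
        refine ⟨o2, h, by tauto, ?_⟩
        rintro ⟨h', -⟩
        exact h.1 h'.symm
      · obtain ⟨ω', hω'⟩ := hP ω hω
        by_cases e3 : ω' = o1
        · have : ∃ ω'', PP ω ω'' ∧ ω'' ≠ o1 := by
            by_contra hc
            push Not at hc
            exact hl ⟨ω, o1, e3 ▸ hω', hc⟩
          obtain ⟨ω'', h1, h2⟩ := this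
          exact ⟨ω'', h1, by tauto, by tauto⟩
        · exact ⟨ω', hω', by tauto, by tauto⟩
  · have hel : ∀ ω : Om B X, Elm ω := by
      intro ω
      by_contra hc
      exact hE ⟨ω, hP ω hc⟩
    have hnb : ∀ o1 o2 ω : Om B X, ¬ Elm ω →
        ∃ ω', PP ω ω' ∧ ¬ (ω = o1 ∧ ω' ≠ o2) ∧ ¬ (ω' = o1 ∧ ω ≠ o2) :=
      fun o1 o2 ω h => absurd (hel ω) h
    have ht : ∀ ω : Om B X, TI ω ∨ TII ω := fun ω => (lemmaE (G := B ⧸ St ω) (hel ω).sq).2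
    obtain ⟨ω0, h0⟩ := hnt
    by_cases hall : ∀ ω : Om B X, TII ω
    · exact core_b ω0 hall
    by_cases h1 : ∃ ω1 : Om B X, TI ω1 ∧ ω1 ≠ ω0
    · obtain ⟨ω1, h1, hne⟩ := h1
      exact core_a ω1 ω0 (fun _ => hne.symm) (hnb _ _) (Or.inr h1) (fun _ => h0)
    push Not at h1 hall
    obtain ⟨ω1, hω1⟩ := hall
    have hI := (ht ω1).resolve_right hω1
    obtain rfl := h1 ω1 hI
    by_cases h2 : ∃ ω, ω ≠ ω1
    · obtain ⟨ω, hω⟩ := h2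
      refine core_a ω1 ω (fun _ => hω) (hnb _ _) (Or.inr hI) (fun _ htop => ?_)
      obtain ⟨-, κ, -, x, y, -, hx, -⟩ := (ht ω).resolve_left (fun h => hω (h1 ω h))
      obtain ⟨d, rfl⟩ := QuotientGroup.mk_surjective x
      exact hx ((QuotientGroup.eq_one_iff d).2 (htop ▸ Subgroup.mem_top d))
    · exact core_a ω1 ω1 (fun h => absurd h h2) (hnb _ _) (Or.inr hI) (fun h => absurd rfl h)

end Choices
section Final

theorem st_smul {B : Type*} [CommGroup B] {X : Type*} [MulAction B X] {ω : Om B X} {s : B}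
    (hs : s ∈ St ω) {z : X} (hz : orb B z = ω) : s • z = z := by
  subst hz
  have e := pt_co (B := B) z
  have : s • pt (orb B z) (co B z) = pt (orb B z) (co B z) := by
    rw [smul_pt, eq_comm, pt_eq_iff, mul_comm s, inv_mul_cancel_left]
    exact hs
  rwa [e] at this

theorem abs_main {B : Type*} [CommGroup B] [Finite B] {X : Type*} [Finite X] [MulAction B X]
    (closed : ∀ σ : Equiv.Perm X, (∀ x y, ∃ b : B, ∀ z,
      z ∈ MulAction.orbit B x ∨ z ∈ MulAction.orbit B y → σ z = b • z) → ∃ b : B, ∀ z, σ z = b • z)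
    (hnt : ∃ (b : B) (x : X), b • x ≠ x)
    (hcond : ∀ x : X, (∀ a : B, ∃ b : B, (∀ z ∈ MulAction.orbit B x, b • z = a • a • z) ∧
      ∀ z, z ∉ MulAction.orbit B x → b • z = z) → ∀ a : B, ∀ z ∈ MulAction.orbit B x, a • a • z = z) :
    ∃ γ : Sym2 X → Fin 4, ∀ σ : Equiv.Perm X, (∃ b : B, ∀ z, σ z = b • z) ↔
      ∀ x y, x ≠ y → γ s(σ x, σ y) = γ s(x, y) := by
  classical
  have hC : Nonempty (Core B X) := by
    apply exists_core
    · intro ω hω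
      by_contra hno
      apply hω
      have hsup : ∀ ω', ω ≠ ω' → ∀ a : B, a * a ∈ St ω ⊔ St ω' := by
        intro ω' hne a
        by_contra hc
        exact hno ⟨ω', hne, a, hc⟩
      have hmem : ∀ z : X, z ∈ MulAction.orbit B (ω.out : X) ↔ orb B z = ω := by
        intro z
        rw [← orb_eq_iff, orb_out]
      intro a
      rw [MulAction.mem_stabilizer_iff, mul_smul]
      refine hcond (ω.out : X) ?_ a _ (MulAction.mem_orbit_self _)
      intro a
      let σ : Equiv.Perm X :=
        { toFun := fun x => if orb B x = ω then (a * a) • x else x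
          invFun := fun x => if orb B x = ω then (a * a)⁻¹ • x else x
          left_inv := by
            intro x
            by_cases h : orb B x = ω
            · simp only [if_pos h, orb_smul, inv_smul_smul]
            · simp only [if_neg h]
          right_inv := by
            intro x
            by_cases h : orb B x = ω
            · simp only [if_pos h, orb_smul, smul_inv_smul]
            · simp only [if_neg h] }
      have hσ1 : ∀ x, orb B x = ω → σ x = (a * a) • x := fun x h => if_pos h
      have hσ2 : ∀ x, orb B x ≠ ω → σ x = x := fun x h => if_neg h
      have aux : ∀ ω', ω ≠ ω' → ∃ b : B, (∀ z : X, orb B z = ω → σ z = b • z) ∧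
          ∀ z : X, orb B z = ω' → σ z = b • z := by
        intro ω' hne
        obtain ⟨s, hs, s', hs', he⟩ := Subgroup.mem_sup.1 (hsup ω' hne a)
        refine ⟨s', fun z hz => ?_, fun z hz => ?_⟩
        · rw [hσ1 z hz, ← he, mul_comm, mul_smul, st_smul hs hz]
        · rw [hσ2 z (by rw [hz]; exact hne.symm), st_smul hs' hz]
      obtain ⟨b, hb⟩ := closed σ (by
        intro x y
        simp only [← orb_eq_iff]
        by_cases hx : orb B x = ω
        · by_cases hy : orb B y = ω
          · rw [hx, hy]
            exact ⟨a * a, fun z hz => hσ1 z (hz.elim id id)⟩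
          · rw [hx]
            obtain ⟨b, h1, h2⟩ := aux (orb B y) (fun h => hy h.symm)
            exact ⟨b, fun z hz => hz.elim (h1 z) (h2 z)⟩
        · by_cases hy : orb B y = ω
          · rw [hy]
            obtain ⟨b, h1, h2⟩ := aux (orb B x) (fun h => hx h.symm)
            exact ⟨b, fun z hz => hz.elim (h2 z) (h1 z)⟩
          · refine ⟨1, fun z hz => ?_⟩
            rw [one_smul]
            apply hσ2
            rcases hz with h | h <;> rw [h] <;> assumption)
      refine ⟨b, fun z hz => ?_, fun z hz => ?_⟩
      · rw [← hb, hσ1 z ((hmem z).1 hz), mul_smul]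
      · rw [← hb, hσ2 z (fun h => hz ((hmem z).2 h))]
    · obtain ⟨b, x, hb⟩ := hnt
      refine ⟨orb B x, fun ht => hb ?_⟩
      exact st_smul (ω := orb B x) (ht ▸ Subgroup.mem_top b) rfl
  obtain ⟨C⟩ := hC
  exact C.main closed

theorem abs_main' {B : Type*} [CommGroup B] [Finite B] {X : Type*} [Finite X]
    (f : B →* Equiv.Perm X)
    (closed : ∀ σ : Equiv.Perm X, (∀ x y, ∃ b : B, ∀ z,
      (∃ a : B, f a x = z) ∨ (∃ a : B, f a y = z) → σ z = f b z) → ∃ b : B, ∀ z, σ z = f b z)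
    (hnt : ∃ (b : B) (x : X), f b x ≠ x)
    (hcond : ∀ x : X, (∀ a : B, ∃ b : B, (∀ z, (∃ a : B, f a x = z) → f b z = f a (f a z)) ∧
      ∀ z, (¬ ∃ a : B, f a x = z) → f b z = z) →
      ∀ a : B, ∀ z, (∃ a : B, f a x = z) → f a (f a z) = z) :
    ∃ γ : Sym2 X → Fin 4, ∀ σ : Equiv.Perm X, (∃ b : B, ∀ z, σ z = f b z) ↔
      ∀ x y, x ≠ y → γ s(σ x, σ y) = γ s(x, y) := by
  letI : MulAction B X := MulAction.compHom X f
  exact abs_main (B := B) (X := X) closed hnt hcond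

end Final

/-- A nontrivial abelian subgroup `A ≤ Sym(X)` that is 2-orbit-closed and such that for
every orbit `O`, if `A_O / A_O^*` is an elementary abelian 2-group then so is `A_O`,
is the automorphism group of a 4-coloured graph on `X`. -/
theorem statement6 (X : Type*) [Fintype X] (A : Subgroup (Equiv.Perm X))
    (hnt : A ≠ ⊥) (hab : ∀ a ∈ A, ∀ b ∈ A, a * b = b * a)
    (hclosed : TwoOrbitClosed A)
    (hcond : ∀ x : X, FactorIsElem2 A (orbitOf (A : Set (Equiv.Perm X)) x) →
      ∀ a ∈ A, ∀ z ∈ orbitOf (A : Set (Equiv.Perm X)) x, a (a z) = z) :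
    InGR4 A := by
  letI : CommGroup A :=
    { (inferInstance : Group A) with
      mul_comm := fun a b => Subtype.ext (hab a a.2 b b.2) }
  have horb : ∀ x z : X, (∃ a : A, A.subtype a x = z) ↔ z ∈ orbitOf (A : Set (Equiv.Perm X)) x := by
    intro x z
    constructor
    · rintro ⟨a, h⟩; exact ⟨a, a.2, h⟩
    · rintro ⟨a, ha, h⟩; exact ⟨⟨a, ha⟩, h⟩
  obtain ⟨γ, hγ⟩ := abs_main' (B := A) (X := X) A.subtype (by
      intro σ h
      have : σ ∈ A := by
        apply hclosed
        intro x y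
        obtain ⟨b, hb⟩ := h x y
        refine ⟨b, b.2, fun z hz => hb z ?_⟩
        rw [horb, horb]
        exact hz
      exact ⟨⟨σ, this⟩, fun z => rfl⟩)
    (by
      by_contra hc
      push Not at hc
      apply hnt
      rw [Subgroup.eq_bot_iff_forall]
      intro a ha
      ext x
      exact hc ⟨a, ha⟩ x)
    (by
      intro x h a z hz
      rw [horb] at hz
      refine hcond x ?_ a a.2 z hz
      intro a' ha'
      obtain ⟨b, h1, h2⟩ := h ⟨a', ha'⟩
      refine ⟨b, b.2, fun z hz => h1 z ((horb x z).2 hz), fun z hz => h2 z ?_⟩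
      rw [horb]; exact hz)
  refine ⟨γ, fun σ => ?_⟩
  rw [← hγ]
  constructor
  · intro h; exact ⟨⟨σ, h⟩, fun z => rfl⟩
  · rintro ⟨b, hb⟩
    have : σ = b := Equiv.ext hb
    rw [this]; exact b.2
end

section
/- Let G be a finite abelian group (written additively), let α : x ↦ −x be the involution of G, and let A⁺ be the subgroup of Sym(G) generated by all translations t_g (g ∈ G) together with α. Then A⁺ is the automorphism group of a 4-coloured graph on G (A⁺ ∈ GR(4)). -/
/-- The regular permutation group of a finite abelian group `G`: the subgroup of
`Sym(G)` consisting of all translations `t_g : x ↦ x + g`. -/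
def translations (G : Type*) [AddCommGroup G] : Subgroup (Equiv.Perm G) where
  carrier := {σ | ∃ g : G, σ = Equiv.addRight g}
  one_mem' := ⟨0, by ext x; simp⟩
  mul_mem' := by
    rintro σ τ ⟨g, rfl⟩ ⟨h, rfl⟩
    exact ⟨h + g, by ext x; simp [add_assoc]⟩
  inv_mem' := by
    rintro σ ⟨g, rfl⟩
    exact ⟨-g, by ext x; simp⟩

section Helpers

variable {r : ℕ} (n : Fin r → ℕ)

/-- The standard generators. -/
def gen14 (i : Fin r) : ∀ i : Fin r, ZMod (n i) := Pi.single i 1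

def Is3 (x : ∀ i : Fin r, ZMod (n i)) : Prop :=
  ∃ i : Fin r, i.val = 0 ∧ (x = gen14 n i ∨ x = -gen14 n i)

def Is1 (x : ∀ i : Fin r, ZMod (n i)) : Prop :=
  ∃ i : Fin r, (x = gen14 n i ∨ x = -gen14 n i)

def Is2 (x : ∀ i : Fin r, ZMod (n i)) : Prop :=
  ∃ i j : Fin r, i.val + 1 = j.val ∧
    (x = gen14 n i - gen14 n j ∨ x = -(gen14 n i - gen14 n j))

open Classical in
noncomputable def col14 (x : ∀ i : Fin r, ZMod (n i)) : Fin 4 :=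
  if Is3 n x then 3 else if Is2 n x then 2 else if Is1 n x then 1 else 0

theorem Is3_neg (x : ∀ i : Fin r, ZMod (n i)) : Is3 n (-x) ↔ Is3 n x := by
  unfold Is3
  simp only [neg_eq_iff_eq_neg (a := x), neg_neg, or_comm]

theorem Is1_neg (x : ∀ i : Fin r, ZMod (n i)) : Is1 n (-x) ↔ Is1 n x := by
  unfold Is1
  simp only [neg_eq_iff_eq_neg (a := x), neg_neg, or_comm]

theorem Is2_neg (x : ∀ i : Fin r, ZMod (n i)) : Is2 n (-x) ↔ Is2 n x := by
  unfold Is2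
  simp only [neg_eq_iff_eq_neg (a := x), neg_neg, or_comm]

theorem col14_neg (x : ∀ i : Fin r, ZMod (n i)) : col14 n (-x) = col14 n x := by
  classical
  unfold col14
  exact if_congr (Is3_neg n x) rfl (if_congr (Is2_neg n x) rfl (if_congr (Is1_neg n x) rfl rfl))

theorem gen14_same (i : Fin r) : gen14 n i i = 1 := by simp [gen14]

theorem gen14_ne {i k : Fin r} (h : k ≠ i) : gen14 n i k = 0 := by
  simp [gen14, Pi.single_eq_of_ne h]

variable {n}

theorem one_ne14 (hn : ∀ i, 1 < n i) (i : Fin r) : (1 : ZMod (n i)) ≠ 0 := by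
  have : Fact (1 < n i) := ⟨hn i⟩
  exact one_ne_zero

theorem two14 (hn : ∀ i, 1 < n i) (i : Fin r) (h : (1 : ZMod (n i)) = -1) : n i = 2 := by
  have h2 : ((2 : ℕ) : ZMod (n i)) = 0 := by
    push_cast
    linear_combination h
  rw [ZMod.natCast_eq_zero_iff] at h2
  have := Nat.le_of_dvd (by norm_num) h2
  have := hn i
  omega

theorem neg_gen14 (i : Fin r) (h : n i = 2) : -gen14 n i = gen14 n i := by
  funext k
  by_cases hk : k = i
  · subst hk
    rw [Pi.neg_apply, gen14_same]
    have h2 : ((n k : ℕ) : ZMod (n k)) = 0 := ZMod.natCast_self _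
    rw [congrArg (Nat.cast : ℕ → ZMod (n k)) h] at h2
    push_cast at h2
    linear_combination -h2
  · simp [gen14_ne n hk]

theorem two_of_neg_gen14 (hn : ∀ i, 1 < n i) (i : Fin r) (h : -gen14 n i = gen14 n i) :
    n i = 2 := by
  have := congrFun h i
  rw [Pi.neg_apply, gen14_same] at this
  exact two14 hn i this.symm

theorem gen14_inj (hn : ∀ i, 1 < n i) {i j : Fin r}
    (h : gen14 n i = gen14 n j ∨ gen14 n i = -gen14 n j) : i = j := by
  by_contra hij
  rcases h with h | h <;>
  · have := congrFun h i
    simp [gen14_same, gen14_ne n hij, one_ne14 hn] at this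

/-- The main combinatorial fact. -/
theorem factA (hn : ∀ i, 1 < n i) (hs : ∀ i j : Fin r, i ≤ j → n i = 2 → n j = 2)
    (i k : Fin r) (x : ∀ i : Fin r, ZMod (n i)) (hx : x = gen14 n k ∨ x = -gen14 n k)
    (h : Is2 n (x - gen14 n i)) :
    k.val + 1 = i.val ∨ (i.val + 1 = k.val ∧ x = gen14 n k) := by
  obtain ⟨a, b, hab, h⟩ := h
  have hne : a ≠ b := by rintro rfl; omega
  have o := one_ne14 hn
  have key : ∀ t, t ≠ a → t ≠ b → x t = gen14 n i t := by
    intro t ta tb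
    rcases h with h | h <;>
    · have := congrFun h t
      simp [gen14_ne n ta, gen14_ne n tb, sub_eq_zero] at this
      exact this
  have hki : k ≠ i := by
    rintro rfl
    have : ∀ t, t ≠ k → x t = gen14 n k t := by
      intro t ht
      rcases hx with rfl | rfl <;> simp [gen14_ne n ht]
    by_cases hak : a = k
    · have hbk : b ≠ k := fun hh => hne (hak.trans hh.symm)
      have h1 := this b hbk
      rcases h with h | h <;>
      · have := congrFun h b
        simp [h1, gen14_same, gen14_ne n hne.symm, o, (o b).symm] at this
    · have h1 := this a hak
      rcases h with h | h <;>
      · have := congrFun h a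
        simp [h1, gen14_same, gen14_ne n hne, o, (o a).symm] at this
  have hi : i = a ∨ i = b := by
    by_contra hc
    push Not at hc
    have := key i hc.1 hc.2
    rcases hx with rfl | rfl <;> simp [gen14_same, gen14_ne n hki.symm, (o i).symm] at this
  have hk : k = a ∨ k = b := by
    by_contra hc
    push Not at hc
    have := key k hc.1 hc.2
    rcases hx with rfl | rfl <;> simp [gen14_same, gen14_ne n hki, (o k)] at this
  rcases hi with rfl | rfl
  · rcases hk with rfl | rfl
    · exact absurd rfl hki
    · right
      refine ⟨hab, ?_⟩
      rcases hx with rfl | rfl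
      · rfl
      · apply neg_gen14
        rcases h with h | h
        · have := congrFun h i
          simp [gen14_same, gen14_ne n hne] at this
          exact hs i k (by rw [Fin.le_def]; omega) (two14 hn i this.symm)
        · have := congrFun h k
          simp [gen14_same, gen14_ne n hki] at this
          exact two14 hn k this.symm
  · rcases hk with rfl | rfl
    · left; exact hab
    · exact absurd rfl hki

theorem Is2_not_Is1 (hn : ∀ i, 1 < n i) (x : ∀ i : Fin r, ZMod (n i)) (h2 : Is2 n x) :
    ¬ Is1 n x := by
  rintro ⟨k, hk⟩
  obtain ⟨a, b, hab, h⟩ := h2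
  have hne : a ≠ b := by rintro rfl; omega
  have o := one_ne14 hn
  have : ∀ t, t ≠ k → x t = 0 := by
    intro t ht
    rcases hk with rfl | rfl <;> simp [gen14_ne n ht]
  by_cases hak : a = k
  · have hbk : b ≠ k := fun hh => hne (hak.trans hh.symm)
    have h1 := this b hbk
    rcases h with h | h <;>
    · rw [h] at h1
      simp [gen14_same, gen14_ne n hne.symm, o] at h1
  · have h1 := this a hak
    rcases h with h | h <;>
    · rw [h] at h1
      simp [gen14_same, gen14_ne n hne, o] at h1

theorem Is3_Is1 (x : ∀ i : Fin r, ZMod (n i)) (h : Is3 n x) : Is1 n x := by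
  obtain ⟨i, _, h⟩ := h
  exact ⟨i, h⟩

theorem col_Is3 {x y : ∀ i : Fin r, ZMod (n i)} (h : col14 n x = col14 n y) (hy : Is3 n y) :
    Is3 n x := by
  by_contra hx
  unfold col14 at h
  rw [if_neg hx, if_pos hy] at h
  split_ifs at h <;> revert h <;> decide

theorem col_Is2 (hn : ∀ i, 1 < n i) {x y : ∀ i : Fin r, ZMod (n i)}
    (h : col14 n x = col14 n y) (hy : Is2 n y) : Is2 n x := by
  have h3 : ¬ Is3 n y := fun h3 => Is2_not_Is1 hn y hy (Is3_Is1 y h3)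
  by_contra hx
  unfold col14 at h
  rw [if_neg hx, if_neg h3, if_pos hy] at h
  split_ifs at h <;> revert h <;> decide

theorem col_Is1 (hn : ∀ i, 1 < n i) {x y : ∀ i : Fin r, ZMod (n i)}
    (h : col14 n x = col14 n y) (hy : Is1 n y) : Is1 n x := by
  by_cases hy3 : Is3 n y
  · exact Is3_Is1 x (col_Is3 h hy3)
  have h2 : ¬ Is2 n y := fun h2 => Is2_not_Is1 hn y h2 hy
  by_contra hx
  have hx3 : ¬ Is3 n x := fun h3 => hx (Is3_Is1 x h3)
  unfold col14 at h
  rw [if_neg hx, if_neg hx3, if_neg hy3, if_neg h2, if_pos hy] at h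
  split_ifs at h <;> revert h <;> decide

/-- colour preserving injections -/
def Pres (σ : (∀ i : Fin r, ZMod (n i)) → (∀ i : Fin r, ZMod (n i))) : Prop :=
  Function.Injective σ ∧ ∀ x y, col14 n (σ x - σ y) = col14 n (x - y)

theorem Pres.neg {σ : (∀ i : Fin r, ZMod (n i)) → (∀ i : Fin r, ZMod (n i))} (h : Pres σ) :
    Pres (fun x => -σ x) := by
  refine ⟨fun x y hxy => h.1 (neg_injective hxy), fun x y => ?_⟩
  rw [← h.2 x y, ← col14_neg, neg_sub_neg, neg_sub]

theorem Pres.conj {σ : (∀ i : Fin r, ZMod (n i)) → (∀ i : Fin r, ZMod (n i))} (h : Pres σ) :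
    Pres (fun x => -σ (-x)) := by
  refine ⟨fun x y hxy => neg_injective (h.1 (neg_injective hxy)), fun x y => ?_⟩
  rw [← col14_neg n (x - y)]
  have := h.2 (-x) (-y)
  rw [← neg_sub' x y] at this
  rw [← this, ← col14_neg, neg_sub_neg, neg_sub]

theorem Pres.shift {σ : (∀ i : Fin r, ZMod (n i)) → (∀ i : Fin r, ZMod (n i))} (h : Pres σ)
    (a b : ∀ i : Fin r, ZMod (n i)) :
    Pres (fun x => σ (a + x) - b) := by
  refine ⟨fun x y hxy => add_left_cancel (h.1 (sub_left_injective hxy)), fun x y => ?_⟩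
  have := h.2 (a + x) (a + y)
  rwa [add_sub_add_left_eq_sub, ← sub_sub_sub_cancel_right _ _ b] at this

theorem step14 (hn : ∀ i, 1 < n i) (hs : ∀ i j : Fin r, i ≤ j → n i = 2 → n j = 2)
    {σ : (∀ i : Fin r, ZMod (n i)) → (∀ i : Fin r, ZMod (n i))} (h : Pres σ) (h0 : σ 0 = 0)
    (i j : Fin r) (hij : i.val + 1 = j.val)
    (ih : ∀ k, k ≤ i → σ (gen14 n k) = gen14 n k ∧ σ (-gen14 n k) = -gen14 n k) :
    σ (gen14 n j) = gen14 n j := by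
  have h1 : Is1 n (σ (gen14 n j)) := by
    have := h.2 (gen14 n j) 0
    rw [h0, sub_zero, sub_zero] at this
    exact col_Is1 hn this ⟨j, Or.inl rfl⟩
  obtain ⟨k, hk⟩ := h1
  have h2 : Is2 n (σ (gen14 n j) - gen14 n i) := by
    have := h.2 (gen14 n j) (gen14 n i)
    rw [(ih i le_rfl).1] at this
    exact col_Is2 hn this ⟨i, j, hij, Or.inr (by abel)⟩
  rcases factA hn hs i k _ hk h2 with hc | ⟨hc, hc'⟩
  · exfalso
    have ihk := ih k (by rw [Fin.le_def]; omega)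
    have : j = k := by
      apply gen14_inj hn
      rcases hk with hk | hk
      · left; apply h.1; rw [hk, ihk.1]
      · right; apply h.1; rw [hk, ihk.2]
    subst this
    omega
  · have : k = j := Fin.ext (by omega)
    subst this
    exact hc'

theorem local14 (hn : ∀ i, 1 < n i) (hs : ∀ i j : Fin r, i ≤ j → n i = 2 → n j = 2)
    {σ : (∀ i : Fin r, ZMod (n i)) → (∀ i : Fin r, ZMod (n i))} (h : Pres σ) (h0 : σ 0 = 0)
    (hz : ∀ i : Fin r, i.val = 0 → σ (gen14 n i) = gen14 n i) :
    ∀ m : ℕ, ∀ i : Fin r, i.val = m → σ (gen14 n i) = gen14 n i ∧ σ (-gen14 n i) = -gen14 n i := by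
  intro m
  induction m using Nat.strong_induction_on with
  | _ m ih =>
    intro j hj
    rcases Nat.eq_zero_or_pos m with hm | hm
    · have hj0 : j.val = 0 := by omega
      refine ⟨hz j hj0, ?_⟩
      have h3 : Is3 n (σ (-gen14 n j)) := by
        have := h.2 (-gen14 n j) 0
        rw [h0, sub_zero, sub_zero] at this
        exact col_Is3 this ⟨j, hj0, Or.inr rfl⟩
      obtain ⟨k, hk0, hk⟩ := h3
      have : k = j := Fin.ext (by omega)
      subst this
      rcases hk with hk | hk
      · have h4 : -gen14 n k = gen14 n k := h.1 (by rw [hk, hz k hj0])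
        rw [hk, h4]
      · exact hk
    · have hlt : m - 1 < r := by omega
      have hih : ∀ k : Fin r, k ≤ ⟨m - 1, hlt⟩ →
          σ (gen14 n k) = gen14 n k ∧ σ (-gen14 n k) = -gen14 n k := by
        intro k hk
        rw [Fin.le_def] at hk
        simp only at hk
        exact ih k.val (by omega) k rfl
      refine ⟨step14 hn hs h h0 ⟨m - 1, hlt⟩ j (by simp only; omega) hih, ?_⟩
      have := step14 hn hs h.conj (by simp [h0]) ⟨m - 1, hlt⟩ j (by simp only; omega)
        (fun k hk => by simp [hih k hk])
      exact neg_eq_iff_eq_neg.mp this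

/-- type plus at `x` -/
def Plus (σ : (∀ i : Fin r, ZMod (n i)) → (∀ i : Fin r, ZMod (n i)))
    (x : ∀ i : Fin r, ZMod (n i)) : Prop :=
  ∀ i, σ (x + gen14 n i) = σ x + gen14 n i ∧ σ (x - gen14 n i) = σ x - gen14 n i

def Minus (σ : (∀ i : Fin r, ZMod (n i)) → (∀ i : Fin r, ZMod (n i)))
    (x : ∀ i : Fin r, ZMod (n i)) : Prop :=
  ∀ i, σ (x + gen14 n i) = σ x - gen14 n i ∧ σ (x - gen14 n i) = σ x + gen14 n i

theorem type14 (hn : ∀ i, 1 < n i) (hs : ∀ i j : Fin r, i ≤ j → n i = 2 → n j = 2)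
    {σ : (∀ i : Fin r, ZMod (n i)) → (∀ i : Fin r, ZMod (n i))} (h : Pres σ)
    (x : ∀ i : Fin r, ZMod (n i)) : Plus σ x ∨ Minus σ x := by
  rcases Nat.eq_zero_or_pos r with hr | hr
  · left; intro i; exact absurd i.isLt (by omega)
  have hτ := h.shift x (σ x)
  set τ : (∀ i : Fin r, ZMod (n i)) → (∀ i : Fin r, ZMod (n i)) :=
    fun y => σ (x + y) - σ x with hτd
  have h0 : τ 0 = 0 := by simp [hτd]
  have h3 : Is3 n (τ (gen14 n ⟨0, hr⟩)) := by
    have := hτ.2 (gen14 n ⟨0, hr⟩) 0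
    rw [h0, sub_zero, sub_zero] at this
    exact col_Is3 this ⟨⟨0, hr⟩, rfl, Or.inl rfl⟩
  obtain ⟨k, hk0, hk⟩ := h3
  have : k = ⟨0, hr⟩ := Fin.ext hk0
  subst this
  rcases hk with hk | hk
  · left
    intro i
    have := local14 hn hs hτ h0 (fun i hi => by
      have : i = ⟨0, hr⟩ := Fin.ext hi
      subst this
      exact hk) i.val i rfl
    simp only [hτd, sub_eq_iff_eq_add] at this
    rw [← sub_eq_add_neg] at this
    rw [this.1, this.2]
    constructor <;> abel
  · right
    intro i
    have := local14 hn hs hτ.neg (by simp [h0]) (fun i hi => by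
      have : i = ⟨0, hr⟩ := Fin.ext hi
      subst this
      simp [hk]) i.val i rfl
    simp only [hτd, neg_sub, sub_eq_iff_eq_add] at this
    rw [← sub_eq_add_neg] at this
    obtain ⟨e1, e2⟩ := this
    constructor
    · rw [e1]; abel
    · rw [e2]; abel

theorem propag14 (hn : ∀ i, 1 < n i) (hs : ∀ i j : Fin r, i ≤ j → n i = 2 → n j = 2)
    {σ : (∀ i : Fin r, ZMod (n i)) → (∀ i : Fin r, ZMod (n i))} (h : Pres σ)
    (x : ∀ i : Fin r, ZMod (n i)) (hx : Plus σ x) (i : Fin r) : Plus σ (x + gen14 n i) := by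
  rcases type14 hn hs h (x + gen14 n i) with hp | hm
  · exact hp
  have e1 := (hm i).2
  rw [add_sub_cancel_right, (hx i).1] at e1
  have hi : -gen14 n i = gen14 n i := by
    rw [add_assoc, left_eq_add] at e1
    exact neg_eq_of_add_eq_zero_left e1
  let z : Fin r := ⟨0, by have := i.isLt; omega⟩
  have e2 := (hm z).1
  rw [(hx i).1] at e2
  have e3 : σ (x + gen14 n z + gen14 n i) = σ x + gen14 n z + gen14 n i := by
    rw [← (hx z).1]
    rcases type14 hn hs h (x + gen14 n z) with hp | hm'
    · exact (hp i).1
    · rw [(hm' i).1, sub_eq_add_neg, hi]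
  have hz : -gen14 n z = gen14 n z := by
    rw [add_right_comm] at e3
    rw [e3, add_right_comm, sub_eq_add_neg] at e2
    exact (add_left_cancel e2).symm
  have hall : ∀ j, -gen14 n j = gen14 n j := fun j =>
    neg_gen14 j (hs z j (by rw [Fin.le_def]; exact Nat.zero_le _) (two_of_neg_gen14 hn z hz))
  intro j
  have := hm j
  rw [this.1, this.2, sub_eq_add_neg, hall]
  exact ⟨rfl, rfl⟩

theorem gen_top14 (hn : ∀ i, 1 < n i) (x : ∀ i : Fin r, ZMod (n i)) :
    x ∈ AddSubmonoid.closure (Set.range (gen14 n)) := by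
  have : x = ∑ i, (x i).val • gen14 n i := by
    rw [← Finset.univ_sum_single x]
    refine Finset.sum_congr rfl fun i _ => ?_
    rw [Finset.univ_sum_single x, gen14, ← Pi.single_smul]
    congr 1
    have : NeZero (n i) := ⟨by have := hn i; omega⟩
    simp
  rw [this]
  exact sum_mem fun i _ => nsmul_mem (AddSubmonoid.subset_closure (Set.mem_range_self i)) _

theorem plus14 (hn : ∀ i, 1 < n i) (hs : ∀ i j : Fin r, i ≤ j → n i = 2 → n j = 2)
    {σ : (∀ i : Fin r, ZMod (n i)) → (∀ i : Fin r, ZMod (n i))} (h : Pres σ)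
    (h0 : Plus σ 0) (x : ∀ i : Fin r, ZMod (n i)) : σ x = σ 0 + x := by
  suffices hh : Plus σ x ∧ σ x = σ 0 + x from hh.2
  induction gen_top14 hn x using AddSubmonoid.closure_induction_right with
  | zero => exact ⟨h0, by simp⟩
  | add_right x _ y hy ih =>
    obtain ⟨i, rfl⟩ := hy
    exact ⟨propag14 hn hs h x ih.1 i, by rw [(ih.1 i).1, ih.2, add_assoc]⟩

theorem main14 (hn : ∀ i, 1 < n i) (hs : ∀ i j : Fin r, i ≤ j → n i = 2 → n j = 2)
    {σ : (∀ i : Fin r, ZMod (n i)) → (∀ i : Fin r, ZMod (n i))} (h : Pres σ) :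
    (∀ x, σ x = σ 0 + x) ∨ (∀ x, σ x = σ 0 - x) := by
  rcases type14 hn hs h 0 with hp | hm
  · exact Or.inl (plus14 hn hs h hp)
  · right
    have hp : Plus (fun x => -σ x) 0 := by
      intro i
      simp only
      rw [(hm i).1, (hm i).2]
      constructor <;> abel
    intro x
    have := plus14 hn hs h.neg hp x
    rw [← neg_neg (σ x), this]
    abel

end Helpers

theorem exists_iso14 (G : Type*) [AddCommGroup G] [Fintype G] :
    ∃ (r : ℕ) (n : Fin r → ℕ), (∀ i, 1 < n i) ∧ (∀ i j : Fin r, i ≤ j → n i = 2 → n j = 2) ∧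
      Nonempty (G ≃+ ∀ i : Fin r, ZMod (n i)) := by
  classical
  obtain ⟨ι, _, n, hn, ⟨φ⟩⟩ := AddCommGroup.equiv_directSum_zmod_of_finite' G
  let f : ι ≃ Fin (Fintype.card ι) := Fintype.equivFin ι
  let m : Fin (Fintype.card ι) → ℕ := fun i => n (f.symm i)
  let s := Tuple.sort (fun i => OrderDual.toDual (m i))
  have hmono := Tuple.monotone_sort (fun i => OrderDual.toDual (m i))
  let g : Fin (Fintype.card ι) ≃ ι := s.trans f.symm
  refine ⟨Fintype.card ι, fun i => n (g i), fun i => hn _, ?_, ⟨?_⟩⟩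
  · intro i j hij hi
    have h1 : n (g j) ≤ n (g i) := hmono hij
    have h2 : 1 < n (g j) := hn _
    change n (g i) = 2 at hi
    change n (g j) = 2
    omega
  · exact (φ.trans (DirectSum.addEquivProd (fun i => ZMod (n i)))).trans
      { (Equiv.piCongrLeft (fun i => ZMod (n i)) g).symm with
        map_add' := fun x y => by funext i; rfl }

/-- For a finite abelian group `G`, the subgroup `A⁺` of `Sym(G)` generated by all
translations together with the involution `x ↦ -x` is the automorphism group of a
4-coloured graph on `G`. -/
theorem statement14 (G : Type*) [AddCommGroup G] [Fintype G] :
    InGR4 (Subgroup.closure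
      (insert (Equiv.neg G) {σ : Equiv.Perm G | ∃ g : G, σ = Equiv.addRight g})) := by
  obtain ⟨r, n, hn, hs, ⟨φ⟩⟩ := exists_iso14 G
  have hsymm : ∀ x y : G, col14 n (φ (x - y)) = col14 n (φ (y - x)) := by
    intro x y
    rw [← col14_neg, ← map_neg, neg_sub]
  refine ⟨Sym2.lift ⟨fun x y => col14 n (φ (x - y)), hsymm⟩, fun σ => ⟨fun hσ => ?_, fun hσ => ?_⟩⟩
  · suffices hh : ∀ x y, col14 n (φ (σ x - σ y)) = col14 n (φ (x - y)) by
      intro x y _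
      simpa using hh x y
    induction hσ using Subgroup.closure_induction with
    | mem τ hτ =>
      intro x y
      rcases hτ with rfl | ⟨g, rfl⟩
      · rw [hsymm x y]
        simp only [Equiv.neg_apply]
        congr 2
        abel
      · simp
    | one => intro x y; rfl
    | mul a b _ _ ha hb => intro x y; exact (ha (b x) (b y)).trans (hb x y)
    | inv a _ ha =>
      intro x y
      rw [← ha]
      simp
  · have hp : ∀ x y, col14 n (φ (σ x - σ y)) = col14 n (φ (x - y)) := by
      intro x y
      by_cases hxy : x = y
      · subst hxy; simp
      · simpa using hσ x y hxy
    have hP : Pres (n := n) (fun x => φ (σ (φ.symm x))) := by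
      refine ⟨fun x y hxy => φ.symm.injective (σ.injective (φ.injective hxy)), fun x y => ?_⟩
      simp only
      rw [← map_sub, hp, map_sub]
      simp
    have hT : ∀ g : G, Equiv.addRight g ∈ Subgroup.closure
      (insert (Equiv.neg G) {σ : Equiv.Perm G | ∃ g : G, σ = Equiv.addRight g}) :=
      fun g => Subgroup.subset_closure (Or.inr ⟨g, rfl⟩)
    rcases main14 hn hs hP with h | h
    · have : σ = Equiv.addRight (σ 0) := by
        ext x
        have := h (φ x)
        simp only [AddEquiv.symm_apply_apply, map_zero, ← map_add] at this
        rw [φ.injective this, add_comm]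
        rfl
      rw [this]
      exact hT _
    · have : σ = Equiv.addRight (σ 0) * Equiv.neg G := by
        ext x
        have := h (φ x)
        simp only [AddEquiv.symm_apply_apply, map_zero, ← map_sub] at this
        rw [φ.injective this, sub_eq_neg_add]
        rfl
      rw [this]
      exact mul_mem (hT _) (Subgroup.subset_closure (Or.inl rfl))
end
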